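/- Central limit theorem for lifetime sums: fix integers 0 ≤ q < d. Assume P is a stationary product probability measure on Ω = [0,1]^{K^d}. Then there exists a constant τ² ≥ 0, depending on d and q, such that as n → ∞: (i) |Λ_n|^{−1} E[(L_q^n − E[L_q^n])²] → τ², and (ii) |Λ_n|^{−1/2} (L_q^n − E[L_q^n]) converges in distribution to the Gaussian law N(0,τ²). -/

import Mathlib

open MeasureTheory Filter Topology

noncomputable section

/-- An elementary cube in `ℝ^d`: the `i`-th component is the elementary interval
`[l, l+1]` if the Boolean is `true` (nondegenerate) and `[l, l]` if `false` (degenerate). -/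
abbrev ElemCube (d : ℕ) := Fin d → ℤ × Bool

/-- The dimension of an elementary cube: the number of nondegenerate components. -/
def cubeDim {d : ℕ} (Q : ElemCube d) : ℕ :=
  (Finset.univ.filter fun i => (Q i).2 = true).card

/-- The geometric realization of an elementary cube as a subset of `ℝ^d`. -/
def cubeSet {d : ℕ} (Q : ElemCube d) : Set (Fin d → ℝ) :=
  {x | ∀ i, x i ∈ Set.Icc ((Q i).1 : ℝ) ((Q i).1 + (if (Q i).2 then 1 else 0))}

/-- A cubical set is a union of elementary cubes. -/
def IsCubical {d : ℕ} (X : Set (Fin d → ℝ)) : Prop :=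
  ∃ S : Set (ElemCube d), X = ⋃ Q ∈ S, cubeSet Q

/-- The free `ℤ`-module generated by all elementary cubes of `ℝ^d` (all dimensions mixed). -/
abbrev CubChain (d : ℕ) := ElemCube d →₀ ℤ

/-- The cubical boundary of a single elementary cube, defined by induction on the ambient
dimension, following the inductive definition: in `ℝ¹`, `∂ [l,l+1]^ = [l+1]^ - [l]^` and
`∂ Q̂ = 0` for degenerate `Q`; and for `Q = I × P`,
`∂ Q̂ = (∂ Î) ⋄ P̂ + (-1)^(dim I) Î ⋄ (∂ P̂)`, where `⋄` is the cubical product. -/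
def boundaryCube : (d : ℕ) → ElemCube d → CubChain d
  | 0, _ => 0
  | d + 1, Q =>
      (if (Q 0).2 then
          Finsupp.single (Fin.cons ((Q 0).1 + 1, false) (fun i => Q i.succ)) (1 : ℤ)
            - Finsupp.single (Fin.cons ((Q 0).1, false) (fun i => Q i.succ)) (1 : ℤ)
        else 0)
      + (if (Q 0).2 then (-1 : ℤ) else 1) •
          (boundaryCube d (fun i => Q i.succ)).sum
            (fun R n => Finsupp.single (Fin.cons (Q 0) R) n)

/-- The cubical boundary operator, the `ℤ`-linear extension of `boundaryCube`. -/
def boundaryHom (d : ℕ) : CubChain d →ₗ[ℤ] CubChain d :=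
  Finsupp.lsum ℤ fun Q => LinearMap.toSpanSingleton ℤ (CubChain d) (boundaryCube d Q)

/-- `C_k^d(X)`: the submodule of chains supported on the `k`-dimensional elementary cubes
contained in `X`. -/
def chainsOn (d k : ℕ) (X : Set (Fin d → ℝ)) : Submodule ℤ (CubChain d) :=
  Finsupp.supported ℤ ℤ {Q : ElemCube d | cubeDim Q = k ∧ cubeSet Q ⊆ X}

/-- `Z_q(X) = ker ∂_q^X`, the cycles of the cubical set `X` in degree `q`. -/
def cycleMod (d q : ℕ) (X : Set (Fin d → ℝ)) : Submodule ℤ (CubChain d) :=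
  chainsOn d q X ⊓ LinearMap.ker (boundaryHom d)

/-- `B_q(X) = im ∂_{q+1}^X`, the boundaries of the cubical set `X` in degree `q`. -/
def boundaryMod (d q : ℕ) (X : Set (Fin d → ℝ)) : Submodule ℤ (CubChain d) :=
  Submodule.map (boundaryHom d) (chainsOn d (q + 1) X)

/-- The `q`-th Betti number of a cubical set: the rank of the free part of the `q`-th
cubical homology `H_q(X) = Z_q(X) / B_q(X)`. -/
def betti (d q : ℕ) (X : Set (Fin d → ℝ)) : ℕ :=
  Module.finrank ℤ
    (↥(cycleMod d q X) ⧸ (boundaryMod d q X).comap (cycleMod d q X).subtype)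

/-- `Λ_n = [-n, n]^d ⊆ ℝ^d`. -/
def lambda (d n : ℕ) : Set (Fin d → ℝ) := {x | ∀ i, x i ∈ Set.Icc (-(n : ℝ)) n}

/-- The configuration space `Ω = [0,1]^{K^d}` with the product σ-field. -/
abbrev Config (d : ℕ) := ElemCube d → unitInterval

/-- Translation of an elementary cube by `x ∈ ℤ^d`. -/
def translateCube {d : ℕ} (x : Fin d → ℤ) (Q : ElemCube d) : ElemCube d :=
  fun i => ((Q i).1 + x i, (Q i).2)

/-- The translation action `τ_x` on configurations: `(τ_x ω)_Q = ω_{-x+Q}`. -/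
def configShift {d : ℕ} (x : Fin d → ℤ) (ω : Config d) : Config d :=
  fun Q => ω (translateCube (-x) Q)

/-- Stationarity of a measure on configuration space: `P(τ_x⁻¹ A) = P(A)`. -/
def Stationary {d : ℕ} (P : Measure (Config d)) : Prop :=
  ∀ (x : Fin d → ℤ) (A : Set (Config d)), MeasurableSet A → P (configShift x ⁻¹' A) = P A

/-- Ergodicity of a measure on configuration space under translations. -/
def ErgodicConfig {d : ℕ} (P : Measure (Config d)) : Prop :=
  ∀ A : Set (Config d), MeasurableSet A →
    (∀ x : Fin d → ℤ, configShift x ⁻¹' A = A) → P A = 0 ∨ P A = 1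

/-- The random cubical set `X(t) = ⋃ {Q ∈ K^d : ω_Q ≤ t}`. -/
def cubSet {d : ℕ} (ω : Config d) (t : ℝ) : Set (Fin d → ℝ) :=
  ⋃ Q ∈ {Q : ElemCube d | (ω Q : ℝ) ≤ t}, cubeSet Q

/-- `β_q^n(t)(ω) = β_q(X(t) ∩ Λ_n)`. -/
def bettiN (d q n : ℕ) (t : ℝ) (ω : Config d) : ℕ :=
  betti d q (cubSet ω t ∩ lambda d n)

/-- `β̂_q(t) := limsup_{n → ∞} |Λ_n|⁻¹ E[β_q^n(t)]`, where `|Λ_n| = (2n)^d`. -/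
def betaHat (d q : ℕ) (P : Measure (Config d)) (t : ℝ) : ℝ :=
  limsup (fun n : ℕ => ((2 * (n : ℝ)) ^ d)⁻¹ * ∫ ω, (bettiN d q n t ω : ℝ) ∂P) atTop

/-- The lifetime sum `L_q^n = ∫_0^1 β_q^n(t) dt`. -/
def lifetimeSum (d q n : ℕ) (ω : Config d) : ℝ :=
  ∫ t in (0 : ℝ)..1, (bettiN d q n t ω : ℝ)

/-!
The number of `q`-cells, the rank of `∂_q` and the rank of `∂_{q+1}` are matroid rank functions of
the set of cells, and the Betti number is the first minus the other two. Integrated over the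
filtration, a rank function changes by a bounded nonnegative amount when a single cube is deleted,
and by submodularity this amount decreases as the window grows; its mean therefore stabilizes,
uniformly over all cubes by stationarity. Hence, if `[-n, n]^d` is filled with disjoint blocks, the
deletion of a cube far inside a block has almost the same effect on the large window as on the
block, and the Efron–Stein inequality shows that the variance of the difference between the lifetime
sum and the sum over the blocks is a small fraction of the volume once the blocks are large. The
blocks are independent and identically distributed, so the classical central limit theorem applies
to them, and the limits for a fixed block size converge as the block size grows.
-/

section BoundedFunctions

/-- Bounded measurable real functions. -/
structure BoundedMeasurable {Ω : Type*} [MeasurableSpace Ω] (F : Ω → ℝ) : Prop where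
  measurable : Measurable F
  exists_bound : ∃ C : ℝ, ∀ ω, |F ω| ≤ C

namespace BoundedMeasurable

variable {Ω Ω' : Type*} [MeasurableSpace Ω] [MeasurableSpace Ω'] {F G : Ω → ℝ}

lemma memLp (hF : BoundedMeasurable F) (p : ENNReal) (P : Measure Ω) [IsFiniteMeasure P] :
    MemLp F p P := by
  obtain ⟨C, hC⟩ := hF.exists_bound
  exact .of_bound hF.measurable.aestronglyMeasurable C (.of_forall hC)

lemma integrable (hF : BoundedMeasurable F) (P : Measure Ω) [IsFiniteMeasure P] :
    Integrable F P :=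
  memLp_one_iff_integrable.1 (hF.memLp 1 P)

lemma const (c : ℝ) : BoundedMeasurable fun _ : Ω ↦ c :=
  ⟨measurable_const, |c|, fun _ ↦ le_rfl⟩

lemma add (hF : BoundedMeasurable F) (hG : BoundedMeasurable G) :
    BoundedMeasurable fun ω ↦ F ω + G ω := by
  obtain ⟨C, hC⟩ := hF.exists_bound
  obtain ⟨D, hD⟩ := hG.exists_bound
  exact ⟨hF.measurable.add hG.measurable, C + D,
    fun ω ↦ (abs_add_le _ _).trans (add_le_add (hC ω) (hD ω))⟩

lemma sub (hF : BoundedMeasurable F) (hG : BoundedMeasurable G) :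
    BoundedMeasurable fun ω ↦ F ω - G ω := by
  obtain ⟨C, hC⟩ := hF.exists_bound
  obtain ⟨D, hD⟩ := hG.exists_bound
  exact ⟨hF.measurable.sub hG.measurable, C + D,
    fun ω ↦ (abs_sub _ _).trans (add_le_add (hC ω) (hD ω))⟩

lemma sq (hF : BoundedMeasurable F) : BoundedMeasurable fun ω ↦ F ω ^ 2 := by
  obtain ⟨C, hC⟩ := hF.exists_bound
  refine ⟨hF.measurable.pow_const 2, C ^ 2, fun ω ↦ ?_⟩
  rw [abs_pow]
  exact pow_le_pow_left₀ (abs_nonneg _) (hC ω) 2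

lemma comp (hF : BoundedMeasurable F) {φ : Ω' → Ω} (hφ : Measurable φ) :
    BoundedMeasurable fun ω ↦ F (φ ω) :=
  ⟨hF.measurable.comp hφ, hF.exists_bound.imp fun _ h _ ↦ h _⟩

lemma sum {κ : Type*} (s : Finset κ) {F : κ → Ω → ℝ} (hF : ∀ k ∈ s, BoundedMeasurable (F k)) :
    BoundedMeasurable fun ω ↦ ∑ k ∈ s, F k ω := by
  simp only [← Finset.sum_apply]
  exact Finset.sum_induction F BoundedMeasurable (fun _ _ ↦ add) (const 0) hF

lemma integral_snd {F : Ω × Ω' → ℝ} (hF : BoundedMeasurable F) (P : Measure Ω')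
    [IsProbabilityMeasure P] : BoundedMeasurable fun x ↦ ∫ y, F (x, y) ∂P := by
  obtain ⟨C, hC⟩ := hF.exists_bound
  refine ⟨hF.measurable.stronglyMeasurable.integral_prod_right'.measurable, C, fun x ↦ ?_⟩
  simpa using norm_integral_le_of_norm_le_const (μ := P)
    (f := fun y ↦ F (x, y)) (.of_forall fun y ↦ hC (x, y))

end BoundedMeasurable

end BoundedFunctions

section EfronStein

open ProbabilityTheory Function

variable {ι : Type*} {X : ι → Type*} [∀ i, MeasurableSpace (X i)] {P : Measure (∀ i, X i)}

lemma measurable_piecewise_pi (A : Set ι) [∀ i, Decidable (i ∈ A)] :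
    Measurable fun p : (∀ i, X i) × (∀ i, X i) ↦ A.piecewise p.1 p.2 := by
  refine measurable_pi_lambda _ fun i ↦ ?_
  by_cases hi : i ∈ A
  · simp only [Set.piecewise_eq_of_mem _ _ _ hi]
    fun_prop
  · simp only [Set.piecewise_eq_of_notMem _ _ _ hi]
    fun_prop

lemma measurePreserving_piecewise [IsProbabilityMeasure P]
    (hP : iIndepFun (fun i (x : ∀ i, X i) ↦ x i) P) (A : Set ι)
    [∀ i, Decidable (i ∈ A)] :
    MeasurePreserving (fun p : (∀ i, X i) × (∀ i, X i) ↦ A.piecewise p.1 p.2) (P.prod P) P := by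
  classical
  have : ∀ i, IsProbabilityMeasure (P.map fun x ↦ x i) := fun i ↦
    Measure.isProbabilityMeasure_map (measurable_pi_apply i).aemeasurable
  have hP_eq : P = .infinitePi fun i ↦ P.map fun x ↦ x i := by
    simpa only [Measure.map_id'] using hP.map_fun_eq_infinitePi_map measurable_pi_apply
  refine ⟨measurable_piecewise_pi A, ?_⟩
  conv_rhs => rw [hP_eq]
  refine Measure.eq_infinitePi _ fun s t ht ↦ ?_
  have hbox (s' : Finset ι) : P ((s' : Set ι).pi t) = ∏ i ∈ s', (P.map fun x ↦ x i) (t i) := by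
    conv_lhs => rw [hP_eq]
    exact Measure.infinitePi_pi _ fun i _ ↦ ht i
  have hpreimage : (fun p : (∀ i, X i) × (∀ i, X i) ↦ A.piecewise p.1 p.2) ⁻¹' (s : Set ι).pi t =
      ((s.filter (· ∈ A) : Finset ι) : Set ι).pi t ×ˢ
        ((s.filter (· ∉ A) : Finset ι) : Set ι).pi t := by
    ext p
    simp only [Set.mem_preimage, Set.mem_prod, Set.mem_pi, Finset.mem_coe, Finset.mem_filter,
      Set.piecewise]
    grind
  rw [Measure.map_apply (measurable_piecewise_pi A)
    (.pi s.countable_toSet fun i _ ↦ ht i), hpreimage, Measure.prod_prod, hbox, hbox,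
    Finset.prod_filter_mul_prod_filter_not]

variable [DecidableEq ι]

/-- The average of `F` over the `i`-th coordinate, resampled under `P`. For independent
coordinates this is the conditional expectation of `F` given all other coordinates. -/
def averageOut (P : Measure (∀ i, X i)) (i : ι) (F : (∀ i, X i) → ℝ) (x : ∀ i, X i) : ℝ :=
  ∫ y, F (update x i (y i)) ∂P

lemma dependsOn_averageOut {F : (∀ i, X i) → ℝ} {S : Set ι} {i : ι}
    (hF : DependsOn F (insert i S)) : DependsOn (averageOut P i F) S := by
  intro x x' hxx'
  refine integral_congr_ae (.of_forall fun y ↦ hF fun j hj ↦ ?_)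
  rcases eq_or_ne j i with rfl | hji
  · simp only [update_self]
  · simpa only [update_of_ne hji] using hxx' j (hj.resolve_left hji)

variable [IsProbabilityMeasure P]

lemma measurable_update_apply (i : ι) :
    Measurable fun p : (∀ i, X i) × (∀ i, X i) ↦ update p.1 i (p.2 i) :=
  measurable_update'.comp (measurable_fst.prodMk ((measurable_pi_apply i).comp measurable_snd))

lemma boundedMeasurable_averageOut {F : (∀ i, X i) → ℝ} (hF : BoundedMeasurable F) (i : ι) :
    BoundedMeasurable (averageOut P i F) :=
  (hF.comp (measurable_update_apply i)).integral_snd P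

lemma boundedMeasurable_update {F : (∀ i, X i) → ℝ} (hF : BoundedMeasurable F) (i : ι)
    (x : ∀ i, X i) : BoundedMeasurable fun y : ∀ i, X i ↦ F (update x i (y i)) :=
  hF.comp ((measurable_update_apply i).comp measurable_prodMk_left)

lemma integral_averageOut (hP : iIndepFun (fun i (x : ∀ i, X i) ↦ x i) P) (i : ι)
    {F : (∀ i, X i) → ℝ} (hF : BoundedMeasurable F) :
    ∫ x, averageOut P i F x ∂P = ∫ x, F x ∂P := by
  have hupdate : MeasurePreserving
      (fun p : (∀ i, X i) × (∀ i, X i) ↦ update p.1 i (p.2 i)) (P.prod P) P := by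
    convert measurePreserving_piecewise hP {i}ᶜ using 2 with p
    ext j
    by_cases hj : j = i
    · subst hj
      simp
    · simp [hj]
  rw [← hupdate.map_eq, integral_map hupdate.measurable.aemeasurable
    hF.measurable.aestronglyMeasurable, integral_prod _
      ((hF.comp hupdate.measurable).integrable _), hupdate.map_eq]
  rfl

lemma variance_le_integral_sq_sub {Ω : Type*} [MeasurableSpace Ω] {μ : Measure Ω}
    [IsProbabilityMeasure μ] {Y : Ω → ℝ} (hY : AEStronglyMeasurable Y μ) (c : ℝ) :
    Var[Y; μ] ≤ ∫ ω, (Y ω - c) ^ 2 ∂μ := by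
  rw [← variance_sub_const hY c]
  exact variance_le_expectation_sq (hY.sub aestronglyMeasurable_const)

lemma integral_sq_averageOut_le (hP : iIndepFun (fun i (x : ∀ i, X i) ↦ x i) P) (i : ι)
    {F : (∀ i, X i) → ℝ} (hF : BoundedMeasurable F) :
    ∫ x, averageOut P i F x ^ 2 ∂P ≤ ∫ x, F x ^ 2 ∂P := by
  rw [← integral_averageOut hP i hF.sq]
  refine integral_mono ((boundedMeasurable_averageOut hF i).sq.integrable P)
    ((boundedMeasurable_averageOut hF.sq i).integrable P) fun x ↦ ?_
  have hvar := variance_eq_sub ((boundedMeasurable_update hF i x).memLp 2 P)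
  have := hvar ▸ variance_nonneg _ P
  simpa [averageOut] using this

lemma variance_le_variance_averageOut_add (hP : iIndepFun (fun i (x : ∀ i, X i) ↦ x i) P)
    (i : ι) (a : X i) {F : (∀ i, X i) → ℝ} (hF : BoundedMeasurable F) :
    Var[F; P] ≤ Var[averageOut P i F; P] + ∫ x, (F x - F (update x i a)) ^ 2 ∂P := by
  have hG := boundedMeasurable_averageOut (P := P) hF i
  have hD := (hF.sub (hF.comp (measurable_update_left (a := i) (x := a)))).sq
  have hpointwise (x : ∀ i, X i) : averageOut P i (fun z ↦ F z ^ 2) x - averageOut P i F x ^ 2 ≤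
      averageOut P i (fun z ↦ (F z - F (update z i a)) ^ 2) x := by
    have hFx := boundedMeasurable_update hF i x
    have hle := variance_le_integral_sq_sub (μ := P) hFx.measurable.aestronglyMeasurable
      (F (update x i a))
    rw [variance_eq_sub (hFx.memLp 2 P)] at hle
    simpa [averageOut] using hle
  have hle := integral_mono (μ := P)
    (((boundedMeasurable_averageOut hF.sq i).sub hG.sq).integrable P)
    ((boundedMeasurable_averageOut hD i).integrable P) hpointwise
  rw [integral_sub ((boundedMeasurable_averageOut hF.sq i).integrable P) (hG.sq.integrable P),
    integral_averageOut hP i hF.sq, integral_averageOut hP i hD] at hle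
  rw [variance_eq_sub (hF.memLp 2 P), variance_eq_sub (hG.memLp 2 P), integral_averageOut hP i hF]
  simp only [Pi.pow_apply]
  linarith

lemma averageOut_sub_averageOut_update {i j : ι} (hij : j ≠ i) (a : X j) {F : (∀ i, X i) → ℝ}
    (hF : BoundedMeasurable F) (x : ∀ i, X i) :
    averageOut P i F x - averageOut P i F (update x j a) =
      averageOut P i (fun z ↦ F z - F (update z j a)) x := by
  unfold averageOut
  rw [← integral_sub ((boundedMeasurable_update hF i x).integrable P)
    ((boundedMeasurable_update hF i _).integrable P)]
  simp only [update_comm hij]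

/-- A one-sided **Efron–Stein inequality**: resetting coordinates to the reference values `a`
takes the place of resampling them. -/
theorem variance_le_sum_integral_sq_sub_update (hP : iIndepFun (fun i (x : ∀ i, X i) ↦ x i) P)
    (a : ∀ i, X i) (S : Finset ι) {F : (∀ i, X i) → ℝ} (hF : BoundedMeasurable F)
    (hFS : DependsOn F S) :
    Var[F; P] ≤ ∑ i ∈ S, ∫ x, (F x - F (update x i (a i))) ^ 2 ∂P := by
  induction S using Finset.induction_on generalizing F with
  | empty =>
    have hconst : F = fun _ ↦ F a := funext fun x ↦ hFS fun i hi ↦ absurd hi (by simp)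
    rw [hconst]
    simp [variance_eq_integral aemeasurable_const]
  | insert i S hiS ih =>
    rw [Finset.coe_insert] at hFS
    have hcontract : ∀ j ∈ S, ∫ x, (averageOut P i F x -
        averageOut P i F (update x j (a j))) ^ 2 ∂P ≤ ∫ x, (F x - F (update x j (a j))) ^ 2 ∂P := by
      intro j hj
      simp only [averageOut_sub_averageOut_update (ne_of_mem_of_not_mem hj hiS) (a j) hF]
      exact integral_sq_averageOut_le hP i (hF.sub (hF.comp measurable_update_left))
    calc Var[F; P]
        ≤ Var[averageOut P i F; P] + ∫ x, (F x - F (update x i (a i))) ^ 2 ∂P :=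
          variance_le_variance_averageOut_add hP i (a i) hF
      _ ≤ (∑ j ∈ S, ∫ x, (F x - F (update x j (a j))) ^ 2 ∂P) +
            ∫ x, (F x - F (update x i (a i))) ^ 2 ∂P := by
          gcongr
          exact (ih (boundedMeasurable_averageOut hF i) (dependsOn_averageOut hFS)).trans
            (Finset.sum_le_sum hcontract)
      _ = _ := by rw [Finset.sum_insert hiS, add_comm]

end EfronStein

section Independence

open ProbabilityTheory

lemma iIndepFun_curry {Ω ι : Type*} {κ : ι → Type*} {E : (i : ι) → κ i → Type*}
    [MeasurableSpace Ω] {P : Measure Ω} [∀ i j, MeasurableSpace (E i j)]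
    {Y : (i : ι) → (j : κ i) → Ω → E i j} (hY_meas : ∀ i j, Measurable (Y i j))
    (hY : iIndepFun (fun (p : (i : ι) × κ i) ω ↦ Y p.1 p.2 ω) P) :
    iIndepFun (fun i ω j ↦ Y i j ω) P := by
  have := hY.isProbabilityMeasure
  have : ∀ i j, IsProbabilityMeasure (P.map (Y i j)) :=
    fun i j ↦ Measure.isProbabilityMeasure_map (hY_meas i j).aemeasurable
  have hY_fiber (i : ι) : P.map (fun ω j ↦ Y i j ω) = .infinitePi fun j ↦ P.map (Y i j) :=
    (hY.precomp sigma_mk_injective).map_fun_eq_infinitePi_map (hY_meas i)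
  have hcurry : (fun ω i j ↦ Y i j ω) =
      MeasurableEquiv.piCurry E ∘ fun ω (p : (i : ι) × κ i) ↦ Y p.1 p.2 ω := by
    ext
    simp [Sigma.curry]
  rw [iIndepFun_iff_map_fun_eq_infinitePi_map (by fun_prop), hcurry,
    ← Measure.map_map (by fun_prop) (by fun_prop),
    hY.map_fun_eq_infinitePi_map (by fun_prop),
    Measure.infinitePi_map_piCurry fun i j ↦ P.map (Y i j)]
  simp only [hY_fiber]

lemma iIndepFun_of_dependsOn_of_disjoint {ι κ : Type*} {X : ι → Type*}
    [∀ i, MeasurableSpace (X i)] [∀ i, Nonempty (X i)] {P : Measure (∀ i, X i)}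
    (hP : iIndepFun (fun i (x : ∀ i, X i) ↦ x i) P) {S : κ → Set ι}
    (hS : Pairwise fun k l ↦ Disjoint (S k) (S l)) {F : κ → (∀ i, X i) → ℝ}
    (hF_meas : ∀ k, Measurable (F k)) (hF : ∀ k, DependsOn (F k) (S k)) :
    iIndepFun F P := by
  classical
  have hinj : Function.Injective fun p : (k : κ) × S k ↦ (p.2 : ι) := by
    rintro ⟨k, i, hi⟩ ⟨l, j, hj⟩ rfl
    obtain rfl : k = l := by_contra fun hkl ↦ Set.disjoint_left.1 (hS hkl) hi hj
    rfl
  have hrestrict : iIndepFun (fun k (x : ∀ i, X i) (i : S k) ↦ x i) P :=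
    iIndepFun_curry (fun _ i ↦ measurable_pi_apply i.1) (hP.precomp hinj)
  let extend (k : κ) (y : (i : S k) → X i) (i : ι) : X i :=
    if hi : i ∈ S k then y ⟨i, hi⟩ else Classical.arbitrary (X i)
  have hextend (k : κ) : Measurable (extend k) := by
    refine measurable_pi_lambda _ fun i ↦ ?_
    by_cases hi : i ∈ S k <;> simp only [extend, hi, dif_pos, dif_neg, not_false_eq_true] <;>
      fun_prop
  convert hrestrict.comp (fun k ↦ F k ∘ extend k) fun k ↦ (hF_meas k).comp (hextend k) with k
  funext x
  exact hF k fun i hi ↦ by simp [extend, hi]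

end Independence

section CentralLimit

open ProbabilityTheory Asymptotics

lemma exists_tendsto_of_eventually_dist_le {E : Type*} [MetricSpace E] [CompleteSpace E]
    {z : ℕ → E} {y : ℕ → ℕ → E} {s : ℕ → E} (hy : ∀ m, Tendsto (y m) atTop (𝓝 (s m)))
    (hzy : ∀ ε > 0, ∀ᶠ m in atTop, ∀ᶠ n in atTop, dist (z n) (y m n) ≤ ε) :
    ∃ L, Tendsto s atTop (𝓝 L) ∧ Tendsto z atTop (𝓝 L) := by
  have hs : CauchySeq s := by
    refine Metric.cauchySeq_iff'.2 fun ε hε ↦ ?_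
    obtain ⟨M, hM⟩ := eventually_atTop.1 (hzy (ε / 3) (by positivity))
    refine ⟨M, fun m hm ↦ lt_of_le_of_lt ?_ (by linarith : ε / 3 + ε / 3 < ε)⟩
    refine le_of_tendsto ((hy m).dist (hy M)) ?_
    filter_upwards [hM m hm, hM M le_rfl] with n hmn hMn
    exact (dist_triangle_left _ _ _).trans (add_le_add hmn hMn)
  obtain ⟨L, hL⟩ := cauchySeq_tendsto_of_complete hs
  refine ⟨L, hL, Metric.tendsto_nhds.2 fun ε hε ↦ ?_⟩
  obtain ⟨m, hzm, hsm⟩ := ((hzy (ε / 3) (by positivity)).and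
    (Metric.tendsto_nhds.1 hL (ε / 3) (by positivity))).exists
  filter_upwards [hzm, Metric.tendsto_nhds.1 (hy m) (ε / 3) (by positivity)] with n hzn hyn
  linarith [dist_triangle4 (z n) (y m n) (s m) L]

lemma norm_pow_sub_pow_le {a b : ℂ} (ha : ‖a‖ ≤ 1) (hb : ‖b‖ ≤ 1) (n : ℕ) :
    ‖a ^ n - b ^ n‖ ≤ n * ‖a - b‖ := by
  induction n with
  | zero => simp
  | succ n ih =>
    calc ‖a ^ (n + 1) - b ^ (n + 1)‖ = ‖a ^ n * (a - b) + (a ^ n - b ^ n) * b‖ := by ring_nf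
      _ ≤ ‖a‖ ^ n * ‖a - b‖ + ‖a ^ n - b ^ n‖ * ‖b‖ := by
          rw [← norm_pow, ← norm_mul, ← norm_mul]
          exact norm_add_le _ _
      _ ≤ 1 * ‖a - b‖ + n * ‖a - b‖ * 1 := by
          gcongr
          exact pow_le_one₀ (norm_nonneg a) ha
      _ = (n + 1 : ℕ) * ‖a - b‖ := by
          push_cast
          ring

lemma charFun_sub_charFun_isLittleO_sq {μ ν : Measure ℝ} [IsProbabilityMeasure μ]
    [IsProbabilityMeasure ν] (hμ : MemLp id 2 μ) (hν : MemLp id 2 ν)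
    (hmean : ∫ x, x ∂μ = ∫ x, x ∂ν) (hvar : Var[id; μ] = Var[id; ν]) :
    (fun t ↦ charFun μ t - charFun ν t) =o[𝓝 0] fun t ↦ t ^ 2 := by
  have hsq : ∫ x, x ^ 2 ∂μ = ∫ x, x ^ 2 ∂ν := by
    rw [variance_eq_sub hμ, variance_eq_sub hν] at hvar
    simpa [hmean] using hvar
  have htaylor (t : ℝ) : taylorWithinEval (charFun μ) 2 Set.univ 0 t =
      taylorWithinEval (charFun ν) 2 Set.univ 0 t := by
    rw [taylorWithinEval_charFun_zero (n := 2) hμ, taylorWithinEval_charFun_zero (n := 2) hν]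
    simp [Finset.sum_range_succ, hmean, hsq]
  have hlittle := (taylor_isLittleO_univ (x₀ := 0) (contDiff_charFun (n := 2) hμ)).sub
    (taylor_isLittleO_univ (x₀ := 0) (contDiff_charFun (n := 2) hν))
  refine hlittle.congr (fun t ↦ ?_) fun t ↦ by rw [sub_zero]
  rw [htaylor, sub_sub_sub_cancel_right]

/-- Compare the `N n`-th power of `charFun μ` with that of the Gaussian law of the same mean and
variance, for which the limit is explicit. -/
lemma tendsto_charFun_pow_of_tendsto_mul_sq {μ : Measure ℝ} [IsProbabilityMeasure μ]
    (hμ : MemLp id 2 μ) (hmean : ∫ x, x ∂μ = 0) {N : ℕ → ℕ} {c : ℕ → ℝ} {ρ : ℝ}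
    (hc : Tendsto c atTop (𝓝 0)) (hNc : Tendsto (fun n ↦ N n * c n ^ 2) atTop (𝓝 ρ)) (t : ℝ) :
    Tendsto (fun n ↦ charFun μ (c n * t) ^ N n) atTop
      (𝓝 (Complex.exp (-(ρ * Var[id; μ] * t ^ 2 / 2 : ℝ)))) := by
  set γ := gaussianReal 0 Var[id; μ].toNNReal
  have hlittle : (fun u ↦ charFun μ u - charFun γ u) =o[𝓝 0] fun u ↦ u ^ 2 :=
    charFun_sub_charFun_isLittleO_sq hμ (memLp_id_gaussianReal 2)
      (by rw [hmean, integral_id_gaussianReal])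
      (by rw [variance_id_gaussianReal, Real.coe_toNNReal _ (variance_nonneg _ _)])
  have hct : Tendsto (fun n ↦ c n * t) atTop (𝓝 0) := by simpa using hc.mul_const t
  have hdiff : Tendsto (fun n ↦ charFun μ (c n * t) ^ N n - charFun γ (c n * t) ^ N n)
      atTop (𝓝 0) := by
    have hbig : Tendsto (fun n ↦ N n * ‖charFun μ (c n * t) - charFun γ (c n * t)‖) atTop
        (𝓝 0) := by
      have hO : (fun n ↦ N n * (c n * t) ^ 2) =O[atTop] fun _ ↦ (1 : ℝ) := by
        refine Tendsto.isBigO_one ℝ (hNc.mul_const (t ^ 2)) |>.congr_left fun n ↦ ?_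
        ring
      refine (isLittleO_one_iff ℝ).1 (IsLittleO.trans_isBigO ?_ hO)
      exact (isBigO_refl _ _).mul_isLittleO (hlittle.comp_tendsto hct).norm_left
    exact squeeze_zero_norm
      (fun n ↦ norm_pow_sub_pow_le (norm_charFun_le_one _) (norm_charFun_le_one _) _) hbig
  have hgauss : Tendsto (fun n ↦ charFun γ (c n * t) ^ N n) atTop
      (𝓝 (Complex.exp (-(ρ * Var[id; μ] * t ^ 2 / 2 : ℝ)))) := by
    have hpow (n : ℕ) : charFun γ (c n * t) ^ N n =
        Complex.exp (-(N n * c n ^ 2 * Var[id; μ] * t ^ 2 / 2 : ℝ)) := by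
      rw [charFun_gaussianReal, ← Complex.exp_nat_mul, Real.coe_toNNReal _ (variance_nonneg _ _)]
      push_cast
      ring_nf
    simp only [hpow]
    exact (Complex.continuous_exp.tendsto _).comp ((Complex.continuous_ofReal.tendsto _).comp
      (((hNc.mul_const _).mul_const _).div_const 2)).neg
  simpa using hdiff.add hgauss

variable {Ω : Type*} [MeasurableSpace Ω] {P : Measure Ω}

lemma charFun_map_const_mul_sum {κ : Type*} {Y : κ → Ω → ℝ} {μ : Measure ℝ}
    (hY : iIndepFun Y P) (hμ : ∀ k, HasLaw (Y k) μ P) (A : Finset κ) (c t : ℝ) :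
    charFun (P.map fun ω ↦ c * ∑ k ∈ A, Y k ω) t = charFun μ (c * t) ^ A.card := by
  rw [charFun_map_mul_comp (Finset.aemeasurable_fun_sum _ fun k _ ↦ (hμ k).aemeasurable),
    (hY.restrict A).charFun_map_fun_finsetSum_eq_prod fun k _ ↦ (hμ k).aemeasurable]
  simp [fun k ↦ (hμ k).map_eq]

lemma variance_const_mul_sum {κ : Type*} {Y : κ → Ω → ℝ} {μ : Measure ℝ}
    (hY : iIndepFun Y P) (hμ : ∀ k, HasLaw (Y k) μ P) (hY₂ : ∀ k, MemLp (Y k) 2 P) (A : Finset κ)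
    (c : ℝ) : Var[fun ω ↦ c * ∑ k ∈ A, Y k ω; P] = A.card * c ^ 2 * Var[id; μ] := by
  have hsum := IndepFun.variance_sum (s := A) (fun k _ ↦ hY₂ k) fun k _ l _ hkl ↦ hY.indepFun hkl
  simp only [← Finset.sum_apply]
  rw [variance_const_mul, hsum, Finset.sum_congr rfl fun k _ ↦ (hμ k).variance_eq,
    Finset.sum_const, nsmul_eq_mul]
  ring

lemma sqrt_variance_eq_lpNorm [IsFiniteMeasure P] {X : Ω → ℝ} (hX : AEStronglyMeasurable X P) :
    √Var[X; P] = lpNorm (fun ω ↦ X ω - P[X]) 2 P := by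
  have hcenter : AEStronglyMeasurable (fun ω ↦ X ω - P[X]) P := hX.sub aestronglyMeasurable_const
  rw [lpNorm_eq_integral_norm_rpow_toReal two_ne_zero ENNReal.ofNat_ne_top hcenter,
    variance_eq_integral hX.aemeasurable, Real.sqrt_eq_rpow]
  simp

variable [IsProbabilityMeasure P]

lemma abs_sqrt_variance_sub_sqrt_variance_le {X Y : Ω → ℝ} (hX : MemLp X 2 P)
    (hY : MemLp Y 2 P) : |√Var[X; P] - √Var[Y; P]| ≤ √Var[X - Y; P] := by
  have hX' : MemLp (fun ω ↦ X ω - P[X]) 2 P := hX.sub (memLp_const _)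
  have hY' : MemLp (fun ω ↦ Y ω - P[Y]) 2 P := hY.sub (memLp_const _)
  have hcenter : (fun ω ↦ (X - Y) ω - P[X - Y]) =
      (fun ω ↦ X ω - P[X]) - fun ω ↦ Y ω - P[Y] := by
    rw [integral_sub' (hX.integrable one_le_two) (hY.integrable one_le_two)]
    ext ω
    simp only [Pi.sub_apply]
    ring
  rw [sqrt_variance_eq_lpNorm hX.1, sqrt_variance_eq_lpNorm hY.1,
    sqrt_variance_eq_lpNorm (hX.sub hY).1, hcenter, abs_sub_le_iff]
  exact ⟨sub_le_iff_le_add'.2 (lpNorm_le_lpNorm_add_lpNorm_sub' hY' one_le_two),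
    sub_le_iff_le_add'.2 (lpNorm_le_lpNorm_add_lpNorm_sub hX' one_le_two)⟩

lemma integral_abs_le_sqrt_variance {X : Ω → ℝ} (hX : MemLp X 2 P) (hmean : P[X] = 0) :
    ∫ ω, |X ω| ∂P ≤ √Var[X; P] := by
  have hvar := variance_nonneg |X| P
  rw [variance_eq_sub hX.abs] at hvar
  rw [variance_of_integral_eq_zero hX.aemeasurable hmean]
  refine Real.le_sqrt_of_sq_le ?_
  simpa using hvar

lemma norm_charFun_map_sub_charFun_map_le {X Y : Ω → ℝ} (hX : MemLp X 2 P) (hY : MemLp Y 2 P)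
    (hmean : P[X] = P[Y]) (t : ℝ) :
    ‖charFun (P.map X) t - charFun (P.map Y) t‖ ≤ |t| * √Var[X - Y; P] := by
  have hexp (Z : Ω → ℝ) (hZ : MemLp Z 2 P) :
      charFun (P.map Z) t = ∫ ω, Complex.exp (t * Z ω * Complex.I) ∂P ∧
      Integrable (fun ω ↦ Complex.exp (t * Z ω * Complex.I)) P := by
    have := hZ.aemeasurable
    rw [charFun_apply_real, integral_map this (by fun_prop)]
    refine ⟨rfl, .of_bound (C := 1) (by fun_prop) (.of_forall fun ω ↦ ?_)⟩
    rw [← Complex.ofReal_mul, Complex.norm_exp_ofReal_mul_I]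
  have hlip (x y : ℝ) : ‖Complex.exp (t * x * Complex.I) - Complex.exp (t * y * Complex.I)‖ ≤
      |t| * |x - y| := by
    have hfactor : Complex.exp (t * x * Complex.I) - Complex.exp (t * y * Complex.I) =
        Complex.exp ((t * y : ℝ) * Complex.I) *
          (Complex.exp (Complex.I * (t * (x - y) : ℝ)) - 1) := by
      rw [mul_sub, ← Complex.exp_add]
      push_cast
      ring_nf
    rw [hfactor, norm_mul, Complex.norm_exp_ofReal_mul_I, one_mul, ← abs_mul]
    exact Real.norm_exp_I_mul_ofReal_sub_one_le
  have hXY : Integrable (X - Y) P := (hX.sub hY).integrable one_le_two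
  rw [(hexp X hX).1, (hexp Y hY).1, ← integral_sub (hexp X hX).2 (hexp Y hY).2]
  calc _ ≤ ∫ ω, |t| * |(X - Y) ω| ∂P :=
        norm_integral_le_of_norm_le (hXY.abs.const_mul _) (.of_forall fun ω ↦ hlip _ _)
    _ = |t| * ∫ ω, |(X - Y) ω| ∂P := integral_const_mul _ _
    _ ≤ |t| * √Var[X - Y; P] := by
        gcongr
        refine integral_abs_le_sqrt_variance (hX.sub hY) ?_
        rw [integral_sub' (hX.integrable one_le_two) (hY.integrable one_le_two), hmean, sub_self]

lemma tendsto_integral_comp_of_tendsto_charFun {Z : ℕ → Ω → ℝ} {ν : Measure ℝ}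
    [IsProbabilityMeasure ν] (hZ : ∀ n, AEMeasurable (Z n) P)
    (hchar : ∀ t, Tendsto (fun n ↦ charFun (P.map (Z n)) t) atTop (𝓝 (charFun ν t)))
    (g : BoundedContinuousFunction ℝ ℝ) :
    Tendsto (fun n ↦ ∫ ω, g (Z n ω) ∂P) atTop (𝓝 (∫ z, g z ∂ν)) := by
  let law (n : ℕ) : ProbabilityMeasure ℝ := ⟨P.map (Z n), Measure.isProbabilityMeasure_map (hZ n)⟩
  have hlaw : Tendsto law atTop (𝓝 ⟨ν, inferInstance⟩) :=
    ProbabilityMeasure.tendsto_iff_tendsto_charFun.2 hchar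
  refine (ProbabilityMeasure.tendsto_iff_forall_integral_tendsto.1 hlaw g).congr fun n ↦ ?_
  exact integral_map (hZ n) g.continuous.aestronglyMeasurable

theorem exists_gaussian_limit_of_approximation {Z : ℕ → Ω → ℝ} {T : ℕ → ℕ → Ω → ℝ} {s : ℕ → ℝ}
    (hZ : ∀ n, MemLp (Z n) 2 P) (hT : ∀ m n, MemLp (T m n) 2 P)
    (hmean : ∀ m n, P[Z n] = P[T m n])
    (hvar : ∀ m, Tendsto (fun n ↦ Var[T m n; P]) atTop (𝓝 (s m)))
    (hchar : ∀ m t, Tendsto (fun n ↦ charFun (P.map (T m n)) t) atTop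
      (𝓝 (Complex.exp (-(s m * t ^ 2 / 2 : ℝ)))))
    (hZT : ∀ ε > 0, ∀ᶠ m in atTop, ∀ᶠ n in atTop, Var[Z n - T m n; P] ≤ ε) :
    ∃ v : NNReal, Tendsto (fun n ↦ Var[Z n; P]) atTop (𝓝 (v : ℝ)) ∧
      ∀ g : BoundedContinuousFunction ℝ ℝ,
        Tendsto (fun n ↦ ∫ ω, g (Z n ω) ∂P) atTop (𝓝 (∫ z, g z ∂(gaussianReal 0 v))) := by
  have hsqrt (ε : ℝ) (hε : 0 < ε) :
      ∀ᶠ m in atTop, ∀ᶠ n in atTop, √Var[Z n - T m n; P] ≤ ε := by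
    filter_upwards [hZT (ε ^ 2) (by positivity)] with m hm
    filter_upwards [hm] with n hn
    exact Real.sqrt_le_iff.2 ⟨hε.le, hn⟩
  obtain ⟨σ, hsσ, hZσ⟩ := exists_tendsto_of_eventually_dist_le
    (z := fun n ↦ √Var[Z n; P]) (y := fun m n ↦ √Var[T m n; P]) (fun m ↦ (hvar m).sqrt)
    fun ε hε ↦ (hsqrt ε hε).mono fun m hm ↦ hm.mono fun n hn ↦
      (abs_sqrt_variance_sub_sqrt_variance_le (hZ n) (hT m n)).trans hn
  have hs : Tendsto s atTop (𝓝 (σ ^ 2)) := by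
    refine (hsσ.pow 2).congr fun m ↦ Real.sq_sqrt ?_
    exact ge_of_tendsto' (hvar m) fun n ↦ variance_nonneg _ _
  obtain ⟨v, hv⟩ : ∃ v : NNReal, (v : ℝ) = σ ^ 2 := ⟨⟨σ ^ 2, sq_nonneg σ⟩, rfl⟩
  refine ⟨v, ?_, tendsto_integral_comp_of_tendsto_charFun
    (fun n ↦ (hZ n).aemeasurable) fun t ↦ ?_⟩
  · rw [hv]
    exact (hZσ.pow 2).congr fun n ↦ Real.sq_sqrt (variance_nonneg _ _)
  · obtain ⟨φ, hsφ, hZφ⟩ := exists_tendsto_of_eventually_dist_le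
      (z := fun n ↦ charFun (P.map (Z n)) t) (hchar · t) fun ε hε ↦
        (hsqrt (ε / (|t| + 1)) (by positivity)).mono fun m hm ↦ hm.mono fun n hn ↦ by
          rw [dist_eq_norm]
          refine (norm_charFun_map_sub_charFun_map_le (hZ n) (hT m n) (hmean m n) t).trans ?_
          rw [le_div_iff₀ (by positivity)] at hn
          nlinarith [Real.sqrt_nonneg Var[Z n - T m n; P]]
    have hφ : φ = charFun (gaussianReal 0 v) t := by
      refine tendsto_nhds_unique hsφ ?_
      have hgauss : charFun (gaussianReal 0 v) t = Complex.exp (-(σ ^ 2 * t ^ 2 / 2 : ℝ)) := by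
        rw [charFun_gaussianReal, ← hv]
        simp
      rw [hgauss]
      exact (Complex.continuous_exp.tendsto _).comp ((Complex.continuous_ofReal.tendsto _).comp
        ((hs.mul_const _).div_const 2)).neg
    exact hφ ▸ hZφ

section BlockApproximation

variable {κ : Type*} {Z : ℕ → Ω → ℝ} {Y : ℕ → κ → Ω → ℝ} {μ : ℕ → Measure ℝ}
  [∀ m, IsProbabilityMeasure (μ m)] {A : ℕ → ℕ → Finset κ} {a : ℕ → ℝ} {ρ : ℕ → ℝ}

lemma clt_of_centered_block_approximation (hZ : ∀ n, MemLp (Z n) 2 P) (hZ₀ : ∀ n, P[Z n] = 0)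
    (hY : ∀ m, iIndepFun (Y m) P) (hμ : ∀ m k, HasLaw (Y m k) (μ m) P)
    (hμ₂ : ∀ m, MemLp id 2 (μ m)) (hμ₀ : ∀ m, ∫ x, x ∂μ m = 0)
    (ha : Tendsto a atTop atTop)
    (hA : ∀ m, Tendsto (fun n ↦ (A m n).card / a n) atTop (𝓝 (ρ m)))
    (hZY : ∀ ε > 0, ∀ᶠ m in atTop, ∀ᶠ n in atTop,
      Var[fun ω ↦ Z n ω - ∑ k ∈ A m n, Y m k ω; P] ≤ ε * a n) :
    ∃ v : NNReal, Tendsto (fun n ↦ (a n)⁻¹ * Var[Z n; P]) atTop (𝓝 (v : ℝ)) ∧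
      ∀ g : BoundedContinuousFunction ℝ ℝ,
        Tendsto (fun n ↦ ∫ ω, g ((√(a n))⁻¹ * Z n ω) ∂P) atTop
          (𝓝 (∫ z, g z ∂(gaussianReal 0 v))) := by
  have hY₂ (m k) : MemLp (Y m k) 2 P :=
    ((hμ m k).map_eq ▸ hμ₂ m).comp_of_map (hμ m k).aemeasurable
  have hsum₂ (m n) : MemLp (fun ω ↦ ∑ k ∈ A m n, Y m k ω) 2 P :=
    memLp_finsetSum _ fun k _ ↦ hY₂ m k
  have hsum₀ (m n) : ∫ ω, ∑ k ∈ A m n, Y m k ω ∂P = 0 := by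
    rw [integral_finsetSum _ fun k _ ↦ (hY₂ m k).integrable one_le_two]
    exact Finset.sum_eq_zero fun k _ ↦ (hμ m k).integral_eq.trans (hμ₀ m)
  have hc : Tendsto (fun n ↦ (√(a n))⁻¹) atTop (𝓝 0) :=
    tendsto_inv_atTop_zero.comp (Real.tendsto_sqrt_atTop.comp ha)
  have hc_sq : ∀ᶠ n in atTop, (√(a n))⁻¹ ^ 2 = (a n)⁻¹ := by
    filter_upwards [ha.eventually_ge_atTop 0] with n hn
    rw [inv_pow, Real.sq_sqrt hn]
  have hAc (m) : Tendsto (fun n ↦ (A m n).card * (√(a n))⁻¹ ^ 2) atTop (𝓝 (ρ m)) :=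
    (hA m).congr' (hc_sq.mono fun n hn ↦ by simp only [hn, div_eq_mul_inv])
  obtain ⟨v, hvar, hlim⟩ := exists_gaussian_limit_of_approximation (P := P)
    (Z := fun n ω ↦ (√(a n))⁻¹ * Z n ω) (T := fun m n ω ↦ (√(a n))⁻¹ * ∑ k ∈ A m n, Y m k ω)
    (s := fun m ↦ ρ m * Var[id; μ m]) (fun n ↦ (hZ n).const_mul _)
    (fun m n ↦ (hsum₂ m n).const_mul _)
    (fun m n ↦ by rw [integral_const_mul, integral_const_mul, hZ₀, hsum₀])
    (fun m ↦ by
      simp only [variance_const_mul_sum (hY m) (hμ m) (hY₂ m)]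
      exact (hAc m).mul_const _)
    (fun m t ↦ by
      simp only [charFun_map_const_mul_sum (hY m) (hμ m)]
      exact tendsto_charFun_pow_of_tendsto_mul_sq (hμ₂ m) (hμ₀ m) hc (hAc m) t)
    fun ε hε ↦ (hZY ε hε).mono fun m hm ↦ by
      filter_upwards [hm, hc_sq, ha.eventually_gt_atTop 0] with n hn hcn han
      have hdiff : (fun ω ↦ (√(a n))⁻¹ * Z n ω) - (fun ω ↦ (√(a n))⁻¹ * ∑ k ∈ A m n, Y m k ω) =
          fun ω ↦ (√(a n))⁻¹ * (Z n ω - ∑ k ∈ A m n, Y m k ω) :=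
        funext fun ω ↦ (mul_sub _ _ _).symm
      rwa [hdiff, variance_const_mul, hcn, inv_mul_le_iff₀ han, mul_comm]
  refine ⟨v, hvar.congr' (hc_sq.mono fun n hn ↦ ?_), hlim⟩
  rw [variance_const_mul, hn]

theorem clt_of_block_approximation (hZ : ∀ n, MemLp (Z n) 2 P)
    (hY : ∀ m, iIndepFun (Y m) P) (hμ : ∀ m k, HasLaw (Y m k) (μ m) P)
    (hμ₂ : ∀ m, MemLp id 2 (μ m)) (ha : Tendsto a atTop atTop)
    (hA : ∀ m, Tendsto (fun n ↦ (A m n).card / a n) atTop (𝓝 (ρ m)))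
    (hZY : ∀ ε > 0, ∀ᶠ m in atTop, ∀ᶠ n in atTop,
      Var[fun ω ↦ Z n ω - ∑ k ∈ A m n, Y m k ω; P] ≤ ε * a n) :
    ∃ v : NNReal, Tendsto (fun n ↦ (a n)⁻¹ * ∫ ω, (Z n ω - P[Z n]) ^ 2 ∂P) atTop (𝓝 (v : ℝ)) ∧
      ∀ g : BoundedContinuousFunction ℝ ℝ,
        Tendsto (fun n ↦ ∫ ω, g ((√(a n))⁻¹ * (Z n ω - P[Z n])) ∂P) atTop
          (𝓝 (∫ z, g z ∂(gaussianReal 0 v))) := by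
  have hcenter (m) : HasLaw (fun x ↦ x - ∫ y, y ∂μ m) ((μ m).map fun x ↦ x - ∫ y, y ∂μ m) (μ m) :=
    ⟨by fun_prop, rfl⟩
  have hprob (m) : IsProbabilityMeasure ((μ m).map fun x ↦ x - ∫ y, y ∂μ m) :=
    Measure.isProbabilityMeasure_map (hcenter m).aemeasurable
  have hint (n) := (hZ n).integrable one_le_two
  have hμint (m) : Integrable (fun x ↦ x) (μ m) := (hμ₂ m).integrable one_le_two
  obtain ⟨v, hvar, hlim⟩ := clt_of_centered_block_approximation (a := a) (A := A)
    (Z := fun n ω ↦ Z n ω - P[Z n]) (Y := fun m k ω ↦ Y m k ω - ∫ y, y ∂μ m)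
    (fun n ↦ (hZ n).sub (memLp_const _))
    (fun n ↦ by rw [integral_sub (hint n) (integrable_const _)]; simp)
    (fun m ↦ (hY m).comp (fun _ x ↦ x - ∫ y, y ∂μ m) fun _ ↦ by fun_prop)
    (fun m k ↦ (hcenter m).comp (hμ m k))
    (fun m ↦ by
      rw [memLp_map_measure_iff aestronglyMeasurable_id (hcenter m).aemeasurable]
      exact (hμ₂ m).sub (memLp_const _))
    (fun m ↦ by
      rw [← (hcenter m).integral_eq, integral_sub (hμint m) (integrable_const _)]
      simp) ha hA
    fun ε hε ↦ (hZY ε hε).mono fun m hm ↦ hm.mono fun n hn ↦ by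
      have hshift : (fun ω ↦ Z n ω - P[Z n] - ∑ k ∈ A m n, (Y m k ω - ∫ y, y ∂μ m)) =
          fun ω ↦ Z n ω - ∑ k ∈ A m n, Y m k ω - (P[Z n] - (A m n).card * ∫ y, y ∂μ m) := by
        funext ω
        rw [Finset.sum_sub_distrib, Finset.sum_const, nsmul_eq_mul]
        ring
      rwa [hshift, variance_sub_const]
      exact (hZ n).1.sub (Finset.aestronglyMeasurable_fun_sum _ fun k _ ↦
        (hμ m k).aemeasurable.aestronglyMeasurable)
  refine ⟨v, hvar.congr fun n ↦ ?_, hlim⟩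
  rw [variance_sub_const (hZ n).1, variance_eq_integral (hZ n).aemeasurable]

end BlockApproximation

end CentralLimit

section RankFunctions

/-- The rank axioms of a matroid, for real-valued functions of finite sets. -/
structure IsRankFunction {ι : Type*} [DecidableEq ι] (r : Finset ι → ℝ) : Prop where
  nonneg : ∀ S, 0 ≤ r S
  le_card : ∀ S, r S ≤ S.card
  mono : Monotone r
  submodular : ∀ S T, r (S ∪ T) + r (S ∩ T) ≤ r S + r T

namespace IsRankFunction

variable {ι : Type*} [DecidableEq ι] {r : Finset ι → ℝ}

lemma filter (hr : IsRankFunction r) (p : ι → Prop) [DecidablePred p] :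
    IsRankFunction fun S ↦ r (S.filter p) where
  nonneg _ := hr.nonneg _
  le_card S := (hr.le_card _).trans (by exact_mod_cast Finset.card_filter_le S p)
  mono _ _ hST := hr.mono (Finset.filter_subset_filter p hST)
  submodular S T := by
    simpa only [Finset.filter_union, Finset.filter_inter_distrib] using hr.submodular _ _

lemma union_le_add_card (hr : IsRankFunction r) (S A : Finset ι) : r (S ∪ A) ≤ r S + A.card := by
  linarith [hr.submodular S A, hr.nonneg (S ∩ A), hr.le_card A]

lemma union_sub_le_union_sub (hr : IsRankFunction r) {S T : Finset ι} (hST : S ⊆ T)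
    (A : Finset ι) : r (T ∪ A) - r T ≤ r (S ∪ A) - r S := by
  have hsub := hr.submodular T (S ∪ A)
  have hle : r S ≤ r (T ∩ (S ∪ A)) :=
    hr.mono (Finset.subset_inter hST Finset.subset_union_left)
  rw [← Finset.union_assoc, Finset.union_eq_left.2 hST] at hsub
  linarith

end IsRankFunction

variable {ι R M : Type*} [CommRing R] [AddCommGroup M] [Module R M]

/-- The rank of a linear map on the free module spanned by a finite set of basis vectors. -/
def supportRank (φ : (ι →₀ R) →ₗ[R] M) (S : Finset ι) : ℕ :=
  Module.finrank R ((Finsupp.supported R R (S : Set ι)).map φ)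

instance finite_supported (S : Finset ι) :
    Module.Finite R (Finsupp.supported R R (S : Set ι)) :=
  .equiv (Finsupp.supportedEquivFinsupp (S : Set ι)).symm

lemma finrank_supported [StrongRankCondition R] (S : Finset ι) :
    Module.finrank R (Finsupp.supported R R (S : Set ι)) = S.card := by
  rw [(Finsupp.supportedEquivFinsupp (S : Set ι)).finrank_eq]
  simp

lemma supportRank_id [StrongRankCondition R] (S : Finset ι) :
    supportRank (LinearMap.id : (ι →₀ R) →ₗ[R] ι →₀ R) S = S.card := by
  rw [supportRank, Submodule.map_id, finrank_supported]

lemma isRankFunction_supportRank [DecidableEq ι] [IsDomain R] [IsNoetherianRing R]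
    (φ : (ι →₀ R) →ₗ[R] M) : IsRankFunction fun S ↦ (supportRank φ S : ℝ) where
  nonneg _ := Nat.cast_nonneg _
  le_card S := by
    rw [← finrank_supported (R := R) S]
    exact_mod_cast Submodule.finrank_map_le _ _
  mono _ _ hST := Nat.cast_le.2 (Submodule.finrank_mono
    (Submodule.map_mono (Finsupp.supported_mono (Finset.coe_subset.2 hST))))
  submodular S T := by
    let span (S : Finset ι) := (Finsupp.supported R R (S : Set ι)).map φ
    have hunion : span (S ∪ T) = span S ⊔ span T := by
      simp only [span, Finset.coe_union, Finsupp.supported_union, Submodule.map_sup]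
    have hinter : span (S ∩ T) ≤ span S ⊓ span T :=
      le_inf (Submodule.map_mono (Finsupp.supported_mono (by simp)))
        (Submodule.map_mono (Finsupp.supported_mono (by simp)))
    have : Module.Finite R ↥(span S ⊓ span T) :=
      .of_injective (Submodule.inclusion (inf_le_left : _ ≤ span S))
        (Submodule.inclusion_injective _)
    have hle : supportRank φ (S ∩ T) ≤ Module.finrank R ↥(span S ⊓ span T) :=
      Submodule.finrank_mono hinter
    have heq := Submodule.rank_sup_add_rank_inf_eq (span S) (span T)
    rw [← hunion] at heq
    simp only [← Module.finrank_eq_rank] at heq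
    have heq' : supportRank φ (S ∪ T) + Module.finrank R ↥(span S ⊓ span T) =
        supportRank φ S + supportRank φ T := mod_cast heq
    norm_cast
    omega

lemma supportRank_image [DecidableEq ι] (φ : (ι →₀ R) →ₗ[R] M) {e : ι → ι} {ψ : M →ₗ[R] M}
    (hψ : Function.Injective ψ) (hφ : φ ∘ₗ Finsupp.lmapDomain R R e = ψ ∘ₗ φ) (S : Finset ι) :
    supportRank φ (S.image e) = supportRank φ S := by
  rw [supportRank, Finset.coe_image, ← Finsupp.lmapDomain_supported, ← Submodule.map_comp, hφ,
    Submodule.map_comp]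
  exact (Submodule.equivMapOfInjective ψ hψ _).finrank_eq.symm

lemma finrank_inf_ker_add_finrank_map [IsDomain R] {M N : Type*} [AddCommGroup M] [Module R M]
    [AddCommGroup N] [Module R N] (φ : M →ₗ[R] N) (p : Submodule R M) [Module.Finite R p] :
    Module.finrank R ↥(p ⊓ LinearMap.ker φ) + Module.finrank R ↥(p.map φ) =
      Module.finrank R p := by
  have hker : LinearMap.ker (φ.domRestrict p) = (p ⊓ LinearMap.ker φ).comap p.subtype := by
    ext x
    simp [LinearMap.domRestrict_apply]
  rw [← Submodule.finrank_quotient_add_finrank (LinearMap.ker (φ.domRestrict p)),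
    (φ.domRestrict p).quotKerEquivRange.finrank_eq, LinearMap.range_domRestrict, hker,
    (Submodule.comapSubtypeEquivOfLe inf_le_left).finrank_eq, add_comm]

end RankFunctions

section Boundary

variable {d : ℕ}

/-- The cubical product `c ↦ Î ⋄ c` with an elementary interval `I` in the first coordinate. -/
def consChain (I : ℤ × Bool) : CubChain d →ₗ[ℤ] CubChain (d + 1) :=
  Finsupp.lmapDomain ℤ ℤ fun R ↦ (Fin.cons I R : ElemCube (d + 1))

lemma consChain_single (I : ℤ × Bool) (R : ElemCube d) (a : ℤ) :
    consChain I (Finsupp.single R a) = Finsupp.single (Fin.cons I R : ElemCube (d + 1)) a := by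
  simp [consChain]

lemma consChain_mem_supported {I : ℤ × Bool} {c : CubChain d} {s : Set (ElemCube d)}
    {t : Set (ElemCube (d + 1))} (hc : c ∈ Finsupp.supported ℤ ℤ s)
    (hst : ∀ R ∈ s, (Fin.cons I R : ElemCube (d + 1)) ∈ t) :
    consChain I c ∈ Finsupp.supported ℤ ℤ t := by
  refine Finsupp.supported_mono (Set.image_subset_iff.2 hst) ?_
  rw [← Finsupp.lmapDomain_supported]
  exact Submodule.mem_map_of_mem hc

lemma boundaryHom_single (Q : ElemCube d) (a : ℤ) :
    boundaryHom d (Finsupp.single Q a) = a • boundaryCube d Q := by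
  simp [boundaryHom]

lemma boundaryCube_cons (I : ℤ × Bool) (R : ElemCube d) :
    boundaryCube (d + 1) (Fin.cons I R : ElemCube (d + 1)) =
      (if I.2 then consChain (I.1 + 1, false) (Finsupp.single R 1)
          - consChain (I.1, false) (Finsupp.single R 1) else 0)
      + (if I.2 then (-1 : ℤ) else 1) • consChain I (boundaryCube d R) := by
  simp only [boundaryCube, Fin.cons_zero, Fin.cons_succ, consChain_single]
  congr 2

lemma boundaryHom_consChain (I : ℤ × Bool) (c : CubChain d) :
    boundaryHom (d + 1) (consChain I c) =
      (if I.2 then consChain (I.1 + 1, false) c - consChain (I.1, false) c else 0)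
      + (if I.2 then (-1 : ℤ) else 1) • consChain I (boundaryHom d c) := by
  induction c using Finsupp.induction_linear with
  | zero => simp
  | add f g hf hg =>
    simp only [map_add, hf, hg]
    split_ifs <;> simp only [smul_add] <;> abel
  | single R a =>
    have hsmul (J : ℤ × Bool) :
        consChain J (Finsupp.single R a) = a • consChain J (Finsupp.single R 1) := by
      rw [← map_smul]
      simp
    rw [consChain_single, boundaryHom_single, boundaryHom_single, boundaryCube_cons, hsmul, hsmul]
    split_ifs <;> simp [smul_sub]

lemma boundaryHom_boundaryCube : ∀ (d : ℕ) (Q : ElemCube d), boundaryHom d (boundaryCube d Q) = 0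
  | 0, _ => by simp [boundaryCube]
  | d + 1, Q => by
    rw [← Fin.cons_self_tail Q, boundaryCube_cons]
    have ih := boundaryHom_boundaryCube d (Fin.tail Q)
    by_cases hI : (Q 0).2 <;> simp [hI, boundaryHom_consChain, boundaryHom_single, ih]

lemma boundaryHom_boundaryHom (c : CubChain d) : boundaryHom d (boundaryHom d c) = 0 := by
  induction c using Finsupp.induction_linear with
  | zero => simp
  | add f g hf hg => simp [hf, hg]
  | single R a => simp [boundaryHom_single, boundaryHom_boundaryCube]

lemma cubeDim_cons (I : ℤ × Bool) (R : ElemCube d) :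
    cubeDim (Fin.cons I R : ElemCube (d + 1)) = (if I.2 then 1 else 0) + cubeDim R := by
  simp only [cubeDim, Finset.card_filter, Fin.sum_univ_succ, Fin.cons_zero, Fin.cons_succ]

/-- The barycentre of an elementary cube. Since it lies in no proper face, a cube contained in
a union of elementary cubes is contained in one of them. -/
def barycenter (R : ElemCube d) : Fin d → ℝ :=
  fun i ↦ (R i).1 + (if (R i).2 then 1 else 0) / 2

lemma barycenter_mem_cubeSet (R : ElemCube d) : barycenter R ∈ cubeSet R := by
  intro i
  simp only [barycenter, Set.mem_Icc]
  split_ifs <;> constructor <;> linarith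

lemma cubeSet_subset_of_bounds {R : ElemCube d} {l u : Fin d → ℤ}
    (h : ∀ i, l i ≤ (R i).1 ∧ (R i).1 + (if (R i).2 then 1 else 0) ≤ u i) :
    cubeSet R ⊆ Set.Icc (fun i ↦ (l i : ℝ)) (fun i ↦ (u i : ℝ)) := by
  have hl (i) : (l i : ℝ) ≤ (R i).1 := mod_cast (h i).1
  have hu (i) : ((R i).1 : ℝ) + (if (R i).2 then 1 else 0) ≤ u i := mod_cast (h i).2
  exact fun x hx ↦ ⟨fun i ↦ (hl i).trans (hx i).1, fun i ↦ (hx i).2.trans (hu i)⟩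

lemma bounds_of_barycenter_mem {R : ElemCube d} {l u : Fin d → ℤ}
    (h : barycenter R ∈ Set.Icc (fun i ↦ (l i : ℝ)) (fun i ↦ (u i : ℝ))) (i : Fin d) :
    l i ≤ (R i).1 ∧ (R i).1 + (if (R i).2 then 1 else 0) ≤ u i := by
  have hl : 2 * (l i : ℝ) ≤ 2 * (R i).1 + if (R i).2 then 1 else 0 := by
    linarith [show (l i : ℝ) ≤ (R i).1 + (if (R i).2 then 1 else 0) / 2 from h.1 i]
  have hu : 2 * ((R i).1 : ℝ) + (if (R i).2 then 1 else 0) ≤ 2 * u i := by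
    linarith [show (R i).1 + (if (R i).2 then 1 else 0) / 2 ≤ (u i : ℝ) from h.2 i]
  norm_cast at hl hu
  split_ifs at hl hu ⊢ <;> omega

lemma cubeSet_eq_Icc (Q : ElemCube d) :
    cubeSet Q = Set.Icc (fun i ↦ ((Q i).1 : ℝ))
      (fun i ↦ (((Q i).1 + if (Q i).2 then 1 else 0 : ℤ) : ℝ)) := by
  ext x
  simp only [cubeSet, Set.mem_ofPred_eq, Set.mem_Icc, Pi.le_def, ← forall_and]
  push_cast
  rfl

lemma cubeSet_subset_Icc_iff {R : ElemCube d} {l u : Fin d → ℤ} :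
    cubeSet R ⊆ Set.Icc (fun i ↦ (l i : ℝ)) (fun i ↦ (u i : ℝ)) ↔
      ∀ i, l i ≤ (R i).1 ∧ (R i).1 + (if (R i).2 then 1 else 0) ≤ u i :=
  ⟨fun h ↦ bounds_of_barycenter_mem (h (barycenter_mem_cubeSet R)), cubeSet_subset_of_bounds⟩

lemma cubeSet_subset_cubeSet_iff {R Q : ElemCube d} :
    cubeSet R ⊆ cubeSet Q ↔ ∀ i, (Q i).1 ≤ (R i).1 ∧
      (R i).1 + (if (R i).2 then 1 else 0) ≤ (Q i).1 + (if (Q i).2 then 1 else 0) := by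
  rw [cubeSet_eq_Icc Q, cubeSet_subset_Icc_iff]

lemma cubeSet_subset_of_barycenter_mem {R Q : ElemCube d} (h : barycenter R ∈ cubeSet Q) :
    cubeSet R ⊆ cubeSet Q := by
  rw [cubeSet_eq_Icc Q] at h ⊢
  exact cubeSet_subset_of_bounds (bounds_of_barycenter_mem h)

lemma cubeSet_cons_subset_cubeSet_cons {I J : ℤ × Bool} {R Q : ElemCube d} :
    cubeSet (Fin.cons I R : ElemCube (d + 1)) ⊆ cubeSet (Fin.cons J Q : ElemCube (d + 1)) ↔
      (J.1 ≤ I.1 ∧ I.1 + (if I.2 then 1 else 0) ≤ J.1 + (if J.2 then 1 else 0)) ∧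
        cubeSet R ⊆ cubeSet Q := by
  simp only [cubeSet_subset_cubeSet_iff, Fin.forall_fin_succ, Fin.cons_zero, Fin.cons_succ]

lemma boundaryCube_mem_supported_facets : ∀ (d : ℕ) (Q : ElemCube d),
    boundaryCube d Q ∈
      Finsupp.supported ℤ ℤ {R | cubeDim R + 1 = cubeDim Q ∧ cubeSet R ⊆ cubeSet Q}
  | 0, Q => by simp [boundaryCube]
  | d + 1, Q => by
    obtain ⟨I, R, rfl⟩ : ∃ I R, Q = (Fin.cons I R : ElemCube (d + 1)) :=
      ⟨Q 0, Fin.tail Q, (Fin.cons_self_tail Q).symm⟩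
    rw [boundaryCube_cons]
    have ih := boundaryCube_mem_supported_facets d R
    refine Submodule.add_mem _ ?_ (Submodule.smul_mem _ _ (consChain_mem_supported ih ?_))
    · split_ifs with hI
      · refine Submodule.sub_mem _ ?_ ?_
        all_goals
          rw [consChain_single]
          apply Finsupp.single_mem_supported
          simp [cubeDim_cons, cubeSet_cons_subset_cubeSet_cons, hI, add_comm]
      · exact Submodule.zero_mem _
    · rintro R' ⟨hdim, hRR'⟩
      refine ⟨?_, cubeSet_cons_subset_cubeSet_cons.2 ⟨⟨le_rfl, le_rfl⟩, hRR'⟩⟩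
      simp only [cubeDim_cons]
      omega

lemma chainsOn_succ_le_comap_boundaryHom (q : ℕ) (X : Set (Fin d → ℝ)) :
    chainsOn d (q + 1) X ≤ (chainsOn d q X).comap (boundaryHom d) := by
  rw [chainsOn, Finsupp.supported_eq_span_single, Submodule.span_le]
  rintro _ ⟨Q, ⟨hQ, hQX⟩, rfl⟩
  simp only [SetLike.mem_coe, Submodule.mem_comap, boundaryHom_single, one_smul]
  refine Finsupp.supported_mono ?_ (boundaryCube_mem_supported_facets d Q)
  rintro R ⟨hR, hRQ⟩
  exact ⟨by omega, hRQ.trans hQX⟩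

lemma boundaryMod_le_cycleMod (q : ℕ) (X : Set (Fin d → ℝ)) :
    boundaryMod d q X ≤ cycleMod d q X :=
  le_inf (Submodule.map_le_iff_le_comap.2 (chainsOn_succ_le_comap_boundaryHom q X))
    (Submodule.map_le_iff_le_comap.2 fun c _ ↦ boundaryHom_boundaryHom c)

end Boundary

section Translation

variable {d : ℕ}

/-- Invariance of a function of finite sets of elementary cubes under lattice translations. -/
def TranslationInvariant (g : Finset (ElemCube d) → ℝ) : Prop :=
  ∀ x S, g (S.image (translateCube x)) = g S

lemma translateCube_injective (x : Fin d → ℤ) :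
    Function.Injective (translateCube x : ElemCube d → ElemCube d) := by
  intro Q R h
  funext i
  have hi := congrFun h i
  simp only [translateCube, Prod.mk.injEq, add_left_inj] at hi
  exact Prod.ext hi.1 hi.2

lemma translateCube_cons (x : Fin (d + 1) → ℤ) (I : ℤ × Bool) (R : ElemCube d) :
    translateCube x (Fin.cons I R : ElemCube (d + 1)) =
      (Fin.cons (I.1 + x 0, I.2) (translateCube (Fin.tail x) R) : ElemCube (d + 1)) := by
  funext i
  cases i using Fin.cases <;> rfl

/-- The action of a lattice translation on chains. -/
def translateChain (x : Fin d → ℤ) : CubChain d →ₗ[ℤ] CubChain d :=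
  Finsupp.lmapDomain ℤ ℤ (translateCube x)

lemma translateChain_single (x : Fin d → ℤ) (R : ElemCube d) (a : ℤ) :
    translateChain x (Finsupp.single R a) = Finsupp.single (translateCube x R) a := by
  simp [translateChain]

lemma translateChain_consChain (x : Fin (d + 1) → ℤ) (I : ℤ × Bool) (c : CubChain d) :
    translateChain x (consChain I c) =
      consChain (I.1 + x 0, I.2) (translateChain (Fin.tail x) c) := by
  induction c using Finsupp.induction_linear with
  | zero => simp
  | add f g hf hg => simp [hf, hg]
  | single R a => simp only [consChain_single, translateChain_single, translateCube_cons]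

lemma boundaryCube_translateCube : ∀ (d : ℕ) (x : Fin d → ℤ) (Q : ElemCube d),
    boundaryCube d (translateCube x Q) = translateChain x (boundaryCube d Q)
  | 0, _, _ => by simp [boundaryCube]
  | d + 1, x, Q => by
    rw [← Fin.cons_self_tail Q, translateCube_cons, boundaryCube_cons, boundaryCube_cons,
      boundaryCube_translateCube d]
    by_cases hI : (Q 0).2 <;>
      simp [hI, translateChain_consChain, translateChain_single, add_right_comm]

lemma boundaryHom_comp_translateChain (x : Fin d → ℤ) :
    boundaryHom d ∘ₗ translateChain x = translateChain x ∘ₗ boundaryHom d := by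
  refine Finsupp.lhom_ext fun R a ↦ ?_
  simp only [LinearMap.comp_apply, translateChain_single, boundaryHom_single,
    boundaryCube_translateCube, map_smul]

/-- The rank of `φ` on the chains spanned by the `k`-dimensional cubes of `S`. -/
def gradedRank (φ : CubChain d →ₗ[ℤ] CubChain d) (k : ℕ) (S : Finset (ElemCube d)) : ℝ :=
  supportRank φ (S.filter fun Q ↦ cubeDim Q = k)

lemma isRankFunction_gradedRank (φ : CubChain d →ₗ[ℤ] CubChain d) (k : ℕ) :
    IsRankFunction (gradedRank φ k) :=
  (isRankFunction_supportRank φ).filter _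

lemma translationInvariant_gradedRank {φ : CubChain d →ₗ[ℤ] CubChain d}
    (hφ : ∀ x, φ ∘ₗ translateChain x = translateChain x ∘ₗ φ) (k : ℕ) :
    TranslationInvariant (gradedRank φ k) := by
  intro x S
  have hfilter : (S.image (translateCube x)).filter (fun Q ↦ cubeDim Q = k) =
      (S.filter fun Q ↦ cubeDim Q = k).image (translateCube x) := Finset.filter_image
  have hinjective := Finsupp.mapDomain_injective (M := ℤ) (translateCube_injective x)
  rw [gradedRank, hfilter, supportRank_image φ hinjective (hφ x), gradedRank]

end Translation

section Betti

variable {d : ℕ}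

/-- The Betti number, as a function of the set of cubes of a finite cubical set: the rank of the
chains minus the ranks of the outgoing and the incoming boundary operators. -/
def bettiRank (d q : ℕ) (S : Finset (ElemCube d)) : ℝ :=
  gradedRank LinearMap.id q S - gradedRank (boundaryHom d) q S -
    gradedRank (boundaryHom d) (q + 1) S

lemma betti_eq_bettiRank {q : ℕ} {X : Set (Fin d → ℝ)} {K : Finset (ElemCube d)}
    (hK : ∀ Q, Q ∈ K ↔ cubeSet Q ⊆ X) : (betti d q X : ℝ) = bettiRank d q K := by
  have hchains (k : ℕ) : chainsOn d k X = Finsupp.supported ℤ ℤ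
      ((K.filter fun Q ↦ cubeDim Q = k : Finset (ElemCube d)) : Set (ElemCube d)) := by
    unfold chainsOn
    congr 1
    ext Q
    simp [hK, and_comm]
  have : Module.Finite ℤ (chainsOn d q X) := by rw [hchains]; infer_instance
  have : Module.Finite ℤ (cycleMod d q X) :=
    .of_injective (Submodule.inclusion (inf_le_left : _ ≤ chainsOn d q X))
      (Submodule.inclusion_injective _)
  have hcycles : Module.finrank ℤ (cycleMod d q X) +
      Module.finrank ℤ ((chainsOn d q X).map (boundaryHom d)) =
      Module.finrank ℤ (chainsOn d q X) := finrank_inf_ker_add_finrank_map _ _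
  have hhomology : betti d q X + Module.finrank ℤ (boundaryMod d q X) =
      Module.finrank ℤ (cycleMod d q X) := by
    rw [← (Submodule.comapSubtypeEquivOfLe (boundaryMod_le_cycleMod q X)).finrank_eq]
    exact Submodule.finrank_quotient_add_finrank _
  rw [boundaryMod, hchains] at hhomology
  rw [hchains, finrank_supported, ← supportRank_id (R := ℤ)] at hcycles
  have hsum : betti d q X + supportRank (boundaryHom d) (K.filter fun Q ↦ cubeDim Q = q + 1) +
      supportRank (boundaryHom d) (K.filter fun Q ↦ cubeDim Q = q) =
      supportRank (R := ℤ) (M := CubChain d) LinearMap.id (K.filter fun Q ↦ cubeDim Q = q) := by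
    rw [← hcycles, ← hhomology, supportRank, supportRank]
  simp only [bettiRank, gradedRank, ← hsum, Nat.cast_add]
  ring

lemma translationInvariant_bettiRank (d q : ℕ) : TranslationInvariant (bettiRank d q) := by
  intro x S
  have hid := translationInvariant_gradedRank (d := d) (φ := LinearMap.id) (fun _ ↦ rfl) q x S
  have hbd := translationInvariant_gradedRank (boundaryHom_comp_translateChain (d := d))
  simp only [bettiRank, hid, hbd _ x S]

end Betti

section Windows

variable {d : ℕ}

/-- The elementary cubes contained in `x + [-n, n]^d`. -/
def window (x : Fin d → ℤ) (n : ℕ) : Finset (ElemCube d) :=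
  (Fintype.piFinset fun i ↦ Finset.Icc (x i - n) (x i + n) ×ˢ Finset.univ).filter
    fun R ↦ ∀ i, (R i).1 + (if (R i).2 then 1 else 0) ≤ x i + n

lemma mem_window {x : Fin d → ℤ} {n : ℕ} {R : ElemCube d} :
    R ∈ window x n ↔
      ∀ i, x i - n ≤ (R i).1 ∧ (R i).1 + (if (R i).2 then 1 else 0) ≤ x i + n := by
  simp only [window, Finset.mem_filter, Fintype.mem_piFinset, Finset.mem_product, Finset.mem_Icc,
    Finset.mem_univ, and_true, ← forall_and]
  refine forall_congr' fun i ↦ ?_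
  split_ifs <;> omega

lemma mem_window_zero_iff {n : ℕ} {R : ElemCube d} :
    R ∈ window 0 n ↔ cubeSet R ⊆ lambda d n := by
  have hlambda : lambda d n =
      Set.Icc (fun _ ↦ ((-n : ℤ) : ℝ)) (fun _ ↦ ((n : ℤ) : ℝ)) := by
    ext x
    simp [lambda, Pi.le_def, forall_and]
  rw [hlambda, cubeSet_subset_Icc_iff, mem_window]
  simp

lemma window_subset_window {x y : Fin d → ℤ} {n N : ℕ} (h : ∀ i, |x i - y i| + n ≤ N) :
    window x n ⊆ window y N := by
  intro R hR
  rw [mem_window] at hR ⊢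
  intro i
  have hxy := abs_le.1 (le_sub_iff_add_le.2 (h i))
  constructor <;> linarith [(hR i).1, (hR i).2, hxy.1, hxy.2]

/-- The elementary cubes of all dimensions whose lower corner lies in `x + [-r, r)^d`. -/
def cornerBox (x : Fin d → ℤ) (r : ℕ) : Finset (ElemCube d) :=
  Fintype.piFinset fun i ↦ Finset.Ico (x i - r) (x i + r) ×ˢ Finset.univ

lemma mem_cornerBox {x : Fin d → ℤ} {r : ℕ} {Q : ElemCube d} :
    Q ∈ cornerBox x r ↔ ∀ i, x i - r ≤ (Q i).1 ∧ (Q i).1 < x i + r := by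
  simp only [cornerBox, Fintype.mem_piFinset, Finset.mem_product, Finset.mem_Ico, Finset.mem_univ,
    and_true]

lemma card_cornerBox (x : Fin d → ℤ) (r : ℕ) : (cornerBox x r).card = (4 * r) ^ d := by
  have hside : ((r : ℤ) + r).toNat * 2 = 4 * r := by omega
  simp [cornerBox, hside]

lemma cornerBox_subset_cornerBox {x y : Fin d → ℤ} {r s : ℕ} (h : ∀ i, |x i - y i| + r ≤ s) :
    cornerBox x r ⊆ cornerBox y s := by
  intro Q hQ
  rw [mem_cornerBox] at hQ ⊢
  intro i
  have hxy := abs_le.1 (le_sub_iff_add_le.2 (h i))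
  constructor <;> linarith [(hQ i).1, (hQ i).2, hxy.1, hxy.2]

lemma mem_cornerBox_of_cubeSet_subset {x : Fin d → ℤ} {n : ℕ} {R Q : ElemCube d}
    (hR : R ∈ window x n) (hRQ : cubeSet R ⊆ cubeSet Q) : Q ∈ cornerBox x (n + 1) := by
  rw [mem_window] at hR
  rw [cubeSet_subset_cubeSet_iff] at hRQ
  rw [mem_cornerBox]
  intro i
  have hRi := hR i
  have hRQi := hRQ i
  split_ifs at hRi hRQi <;> omega

/-- The faces of an elementary cube, of all dimensions. -/
def faces (Q : ElemCube d) : Finset (ElemCube d) :=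
  (Fintype.piFinset fun i ↦ {(Q i).1, (Q i).1 + 1} ×ˢ Finset.univ).filter fun R ↦
    ∀ i, (R i).1 + (if (R i).2 then 1 else 0) ≤ (Q i).1 + (if (Q i).2 then 1 else 0)

lemma mem_faces {Q R : ElemCube d} : R ∈ faces Q ↔ cubeSet R ⊆ cubeSet Q := by
  simp only [faces, Finset.mem_filter, Fintype.mem_piFinset, Finset.mem_product, Finset.mem_insert,
    Finset.mem_singleton, Finset.mem_univ, and_true, cubeSet_subset_cubeSet_iff, ← forall_and]
  refine forall_congr' fun i ↦ ?_
  split_ifs <;> omega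

lemma card_faces_le (Q : ElemCube d) : (faces Q).card ≤ 4 ^ d :=
  (Finset.card_filter_le _ _).trans (by simp)

/-- The lattice point of an elementary cube with smallest coordinates. -/
def lowerCorner (Q : ElemCube d) : Fin d → ℤ := fun i ↦ (Q i).1

lemma faces_subset_window_lowerCorner (Q : ElemCube d) {n : ℕ} (hn : 1 ≤ n) :
    faces Q ⊆ window (lowerCorner Q) n := by
  intro R hR
  rw [mem_faces, cubeSet_subset_cubeSet_iff] at hR
  rw [mem_window]
  intro i
  have hRi := hR i
  simp only [lowerCorner]
  split_ifs at hRi ⊢ <;> omega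

end Windows

section ActiveCubes

variable {d : ℕ} {g : Finset (ElemCube d) → ℝ} {V : Finset (ElemCube d)} {ω : Config d} {t : ℝ}

open Classical in
/-- The cubes of the window `V` that are contained in the random cubical set `X(t)`. -/
def activeCubes (V : Finset (ElemCube d)) (ω : Config d) (t : ℝ) : Finset (ElemCube d) :=
  V.filter fun R ↦ ∃ Q, cubeSet R ⊆ cubeSet Q ∧ (ω Q : ℝ) ≤ t

lemma mem_activeCubes {R : ElemCube d} :
    R ∈ activeCubes V ω t ↔ R ∈ V ∧ ∃ Q, cubeSet R ⊆ cubeSet Q ∧ (ω Q : ℝ) ≤ t := by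
  simp [activeCubes]

lemma activeCubes_subset : activeCubes V ω t ⊆ V := fun _ hR ↦ (mem_activeCubes.1 hR).1

lemma activeCubes_mono {V' : Finset (ElemCube d)} (hV : V ⊆ V') :
    activeCubes V ω t ⊆ activeCubes V' ω t := fun _ hR ↦ by
  rw [mem_activeCubes] at hR ⊢
  exact ⟨hV hR.1, hR.2⟩

lemma mem_activeCubes_window_zero {n : ℕ} (R : ElemCube d) :
    R ∈ activeCubes (window 0 n) ω t ↔ cubeSet R ⊆ cubSet ω t ∩ lambda d n := by
  rw [mem_activeCubes, Set.subset_inter_iff, mem_window_zero_iff, and_comm]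
  refine and_congr_left fun _ ↦ ⟨?_, fun hR ↦ ?_⟩
  · rintro ⟨Q, hRQ, hQ⟩
    exact hRQ.trans (Set.subset_biUnion_of_mem (u := cubeSet) (x := Q) hQ)
  · obtain ⟨Q, hQ, hmem⟩ := Set.mem_iUnion₂.1 (hR (barycenter_mem_cubeSet R))
    exact ⟨Q, cubeSet_subset_of_barycenter_mem hmem, hQ⟩

/-- The lifetime integral of a function `g` of finite cubical sets in the window `V`: the integral
of `g` over the filtration `X(t)`, `0 ≤ t ≤ 1`. -/
def lifetimeIntegral (g : Finset (ElemCube d) → ℝ) (V : Finset (ElemCube d)) (ω : Config d) : ℝ :=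
  ∫ t in (0 : ℝ)..1, g (activeCubes V ω t)

lemma lifetimeSum_eq_lifetimeIntegral (d q n : ℕ) :
    lifetimeSum d q n = lifetimeIntegral (bettiRank d q) (window 0 n) := by
  funext ω
  exact intervalIntegral.integral_congr fun t _ ↦ betti_eq_bettiRank mem_activeCubes_window_zero

lemma dependsOn_lifetimeIntegral (g : Finset (ElemCube d) → ℝ) (x : Fin d → ℤ) (n : ℕ) :
    DependsOn (lifetimeIntegral g (window x n)) (cornerBox x (n + 1)) := by
  intro ω ω' h
  have hactive (t : ℝ) : activeCubes (window x n) ω t = activeCubes (window x n) ω' t := by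
    ext R
    rw [mem_activeCubes, mem_activeCubes]
    refine and_congr_right fun hR ↦ exists_congr fun Q ↦ and_congr_right fun hRQ ↦ ?_
    rw [h Q (mem_cornerBox_of_cubeSet_subset hR hRQ)]
  simp only [lifetimeIntegral, hactive]

lemma boundedMeasurable_activeCubes (g : Finset (ElemCube d) → ℝ) (V : Finset (ElemCube d)) :
    BoundedMeasurable fun p : Config d × ℝ ↦ g (activeCubes V p.1 p.2) where
  measurable := by
    let : MeasurableSpace (Finset (ElemCube d)) := ⊤
    have hmem (R : ElemCube d) :
        Measurable fun p : Config d × ℝ ↦ R ∈ activeCubes V p.1 p.2 := by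
      simp only [mem_activeCubes]
      refine measurable_const.and (Measurable.exists fun Q ↦ measurable_const.and ?_)
      exact measurableSet_setOfPred.1 (measurableSet_le (by fun_prop) measurable_snd)
    have hactive : Measurable fun p : Config d × ℝ ↦ activeCubes V p.1 p.2 := by
      refine measurable_to_countable' fun S ↦ ?_
      have : (fun p : Config d × ℝ ↦ activeCubes V p.1 p.2) ⁻¹' {S} =
          {p | ∀ R, R ∈ activeCubes V p.1 p.2 ↔ R ∈ S} := by
        ext p
        simp [Finset.ext_iff]
      rw [this]
      exact measurableSet_setOfPred.2 (.forall fun R ↦ (hmem R).iff measurable_const)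
    exact (measurable_from_top (f := g)).comp hactive
  exists_bound := ⟨∑ S ∈ V.powerset, |g S|, fun _ ↦
    Finset.single_le_sum (f := fun S ↦ |g S|) (fun _ _ ↦ abs_nonneg _)
      (Finset.mem_powerset.2 activeCubes_subset)⟩

lemma boundedMeasurable_lifetimeIntegral (g : Finset (ElemCube d) → ℝ)
    (V : Finset (ElemCube d)) : BoundedMeasurable (lifetimeIntegral g V) := by
  have : IsProbabilityMeasure (volume.restrict (Set.Ioc (0 : ℝ) 1)) := ⟨by simp⟩
  unfold lifetimeIntegral
  simp only [intervalIntegral.integral_of_le zero_le_one]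
  exact (boundedMeasurable_activeCubes g V).integral_snd _

lemma intervalIntegrable_activeCubes (g : Finset (ElemCube d) → ℝ) (V : Finset (ElemCube d))
    (ω : Config d) : IntervalIntegrable (fun t ↦ g (activeCubes V ω t)) volume 0 1 := by
  rw [intervalIntegrable_iff, Set.uIoc_of_le zero_le_one]
  exact ((boundedMeasurable_activeCubes g V).comp measurable_prodMk_left).integrable _

lemma lifetimeIntegral_sub (g h : Finset (ElemCube d) → ℝ) (V : Finset (ElemCube d))
    (ω : Config d) :
    lifetimeIntegral (fun S ↦ g S - h S) V ω = lifetimeIntegral g V ω - lifetimeIntegral h V ω :=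
  intervalIntegral.integral_sub (intervalIntegrable_activeCubes g V ω)
    (intervalIntegrable_activeCubes h V ω)

end ActiveCubes

section Stationarity

variable {d : ℕ}

lemma translateCube_translateCube_neg (x : Fin d → ℤ) (R : ElemCube d) :
    translateCube x (translateCube (-x) R) = R := by
  funext i
  simp [translateCube]

lemma cubeSet_translateCube_subset_iff (x : Fin d → ℤ) (R Q : ElemCube d) :
    cubeSet (translateCube x R) ⊆ cubeSet (translateCube x Q) ↔ cubeSet R ⊆ cubeSet Q := by
  simp only [cubeSet_subset_cubeSet_iff, translateCube]
  refine forall_congr' fun i ↦ ?_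
  grind

lemma translateCube_mem_window (x : Fin d → ℤ) (n : ℕ) (R : ElemCube d) :
    translateCube x R ∈ window x n ↔ R ∈ window 0 n := by
  simp only [mem_window, translateCube, Pi.zero_apply]
  refine forall_congr' fun i ↦ ?_
  by_cases hR : (R i).2 <;> simp [hR] <;> omega

lemma activeCubes_window_eq_image (x : Fin d → ℤ) (n : ℕ) (ω : Config d) (t : ℝ) :
    activeCubes (window x n) ω t =
      (activeCubes (window 0 n) (configShift (-x) ω) t).image (translateCube x) := by
  have hsurj : Function.Surjective (translateCube x) :=
    fun R ↦ ⟨_, translateCube_translateCube_neg x R⟩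
  ext R
  obtain ⟨R, rfl⟩ := hsurj R
  rw [mem_activeCubes, translateCube_mem_window, (translateCube_injective x).mem_finset_image,
    mem_activeCubes, hsurj.exists]
  simp only [cubeSet_translateCube_subset_iff, configShift, neg_neg]

lemma lifetimeIntegral_window {g : Finset (ElemCube d) → ℝ} (hg : TranslationInvariant g)
    (x : Fin d → ℤ) (n : ℕ) (ω : Config d) :
    lifetimeIntegral g (window x n) ω =
      lifetimeIntegral g (window 0 n) (configShift (-x) ω) := by
  simp only [lifetimeIntegral, activeCubes_window_eq_image x, hg x _]

lemma Stationary.measurePreserving_configShift {P : Measure (Config d)} (hP : Stationary P)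
    (x : Fin d → ℤ) : MeasurePreserving (configShift x) P P := by
  have hmeas : Measurable (configShift (d := d) x) :=
    measurable_pi_lambda _ fun _ ↦ measurable_pi_apply _
  exact ⟨hmeas, Measure.ext fun A hA ↦ by rw [Measure.map_apply hmeas hA, hP x A hA]⟩

end Stationarity

section Deletion

open Function

variable {d : ℕ} {g : Finset (ElemCube d) → ℝ} {V V' : Finset (ElemCube d)} {Q : ElemCube d}

lemma activeCubes_eq_union_update (V : Finset (ElemCube d)) (Q : ElemCube d) (ω : Config d)
    (t : ℝ) :
    activeCubes V ω t =
      activeCubes V (update ω Q 1) t ∪ if (ω Q : ℝ) ≤ t then V ∩ faces Q else ∅ := by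
  have hle (Q' : ElemCube d) : (ω Q' : ℝ) ≤ (update ω Q 1 Q' : unitInterval) := by
    obtain rfl | hQ := eq_or_ne Q' Q
    · rw [update_self]
      exact (ω Q').2.2
    · rw [update_of_ne hQ]
  ext R
  simp only [Finset.mem_union, mem_activeCubes]
  constructor
  · rintro ⟨hR, Q', hRQ, hQ'⟩
    obtain rfl | hQ := eq_or_ne Q' Q
    · exact .inr (by simpa [hQ', mem_faces] using ⟨hR, hRQ⟩)
    · exact .inl ⟨hR, Q', hRQ, by rwa [update_of_ne hQ]⟩
  · rintro (⟨hR, Q', hRQ, hQ'⟩ | hR)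
    · exact ⟨hR, Q', hRQ, (hle Q').trans hQ'⟩
    · split_ifs at hR with hQ
      · rw [Finset.mem_inter, mem_faces] at hR
        exact ⟨hR.1, Q, hR.2, hQ⟩
      · simp at hR

/-- The change of the lifetime integral in the window `V` when the cube `Q` is deleted from the
filtration, that is, when its birth time is reset to `1`. -/
def deletionEffect (g : Finset (ElemCube d) → ℝ) (V : Finset (ElemCube d)) (Q : ElemCube d)
    (ω : Config d) : ℝ :=
  lifetimeIntegral g V ω - lifetimeIntegral g V (update ω Q 1)

lemma deletionEffect_eq_integral (g : Finset (ElemCube d) → ℝ) (V : Finset (ElemCube d))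
    (Q : ElemCube d) (ω : Config d) :
    deletionEffect g V Q ω =
      ∫ t in (0 : ℝ)..1, (g (activeCubes V ω t) - g (activeCubes V (update ω Q 1) t)) :=
  (intervalIntegral.integral_sub (intervalIntegrable_activeCubes g V ω)
    (intervalIntegrable_activeCubes g V _)).symm

lemma boundedMeasurable_deletionEffect (g : Finset (ElemCube d) → ℝ) (V : Finset (ElemCube d))
    (Q : ElemCube d) : BoundedMeasurable (deletionEffect g V Q) :=
  (boundedMeasurable_lifetimeIntegral g V).sub
    ((boundedMeasurable_lifetimeIntegral g V).comp measurable_update_left)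

lemma deletionEffect_window_eq_zero {x : Fin d → ℤ} {n : ℕ} (hQ : Q ∉ cornerBox x (n + 1))
    (ω : Config d) : deletionEffect g (window x n) Q ω = 0 := by
  refine sub_eq_zero.2 (dependsOn_lifetimeIntegral g x n fun R hR ↦ ?_)
  rw [update_of_ne (ne_of_mem_of_not_mem hR hQ)]

lemma deletionEffect_nonneg (hg : IsRankFunction g) (V : Finset (ElemCube d)) (Q : ElemCube d)
    (ω : Config d) : 0 ≤ deletionEffect g V Q ω := by
  rw [deletionEffect_eq_integral]
  refine intervalIntegral.integral_nonneg zero_le_one fun t _ ↦ sub_nonneg.2 (hg.mono ?_)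
  rw [activeCubes_eq_union_update V Q ω]
  exact Finset.subset_union_left

lemma deletionEffect_le (hg : IsRankFunction g) (V : Finset (ElemCube d)) (Q : ElemCube d)
    (ω : Config d) : deletionEffect g V Q ω ≤ 4 ^ d := by
  have hcard (t : ℝ) : (if (ω Q : ℝ) ≤ t then V ∩ faces Q else ∅).card ≤ 4 ^ d := by
    refine (Finset.card_le_card ?_).trans (card_faces_le Q)
    split_ifs
    exacts [Finset.inter_subset_right, Finset.empty_subset _]
  have hpointwise (t : ℝ) : g (activeCubes V ω t) - g (activeCubes V (update ω Q 1) t) ≤ 4 ^ d := by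
    rw [activeCubes_eq_union_update V Q ω, sub_le_iff_le_add']
    refine (hg.union_le_add_card _ _).trans ?_
    gcongr
    exact_mod_cast hcard t
  rw [deletionEffect_eq_integral]
  simpa using intervalIntegral.integral_mono (μ := volume) (zero_le_one' ℝ)
    ((intervalIntegrable_activeCubes g V ω).sub (intervalIntegrable_activeCubes g V (update ω Q 1)))
    (intervalIntegrable_const (c := (4 : ℝ) ^ d)) hpointwise

lemma deletionEffect_anti (hg : IsRankFunction g) (hV : V ⊆ V') (hQ : faces Q ⊆ V)
    (ω : Config d) : deletionEffect g V' Q ω ≤ deletionEffect g V Q ω := by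
  rw [deletionEffect_eq_integral, deletionEffect_eq_integral]
  refine intervalIntegral.integral_mono (zero_le_one' ℝ)
    ((intervalIntegrable_activeCubes g V' ω).sub (intervalIntegrable_activeCubes g V' _))
    ((intervalIntegrable_activeCubes g V ω).sub (intervalIntegrable_activeCubes g V _))
    fun t ↦ ?_
  simp only [activeCubes_eq_union_update V Q ω, activeCubes_eq_union_update V' Q ω,
    Finset.inter_eq_right.2 hQ, Finset.inter_eq_right.2 (hQ.trans hV)]
  exact hg.union_sub_le_union_sub (activeCubes_mono hV) _

end Deletion

section Stabilization

open Function

variable {d : ℕ} {P : Measure (Config d)} {g : Finset (ElemCube d) → ℝ}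

lemma configShift_neg_update (x : Fin d → ℤ) (Q : ElemCube d) (ω : Config d) (a : unitInterval) :
    configShift (-x) (update ω (translateCube x Q) a) = update (configShift (-x) ω) Q a := by
  funext R
  obtain rfl | hR := eq_or_ne R Q
  · simp [configShift]
  · simp [configShift, update_of_ne hR, update_of_ne ((translateCube_injective x).ne hR)]

lemma integral_deletionEffect_window (hP : Stationary P) (hg : TranslationInvariant g)
    (x : Fin d → ℤ) (n : ℕ) (Q : ElemCube d) :
    ∫ ω, deletionEffect g (window x n) (translateCube x Q) ω ∂P =
      ∫ ω, deletionEffect g (window 0 n) Q ω ∂P := by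
  have hshift (ω : Config d) : deletionEffect g (window x n) (translateCube x Q) ω =
      deletionEffect g (window 0 n) Q (configShift (-x) ω) := by
    simp only [deletionEffect, lifetimeIntegral_window hg x, configShift_neg_update]
  have hpres := hP.measurePreserving_configShift (-x)
  simp only [hshift]
  conv_rhs => rw [← hpres.map_eq]
  exact (integral_map hpres.measurable.aemeasurable
    (boundedMeasurable_deletionEffect g _ Q).measurable.aestronglyMeasurable).symm

/-- On average, the effect of deleting a cube changes by at most `ε` when the window of radius `ρ`
around the cube is enlarged. -/
def StabilizesWithin (P : Measure (Config d)) (g : Finset (ElemCube d) → ℝ) (ε : ℝ) (ρ : ℕ) :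
    Prop :=
  ∀ (Q : ElemCube d) (N : ℕ), ρ ≤ N → ∫ ω, deletionEffect g (window (lowerCorner Q) ρ) Q ω ∂P -
    ∫ ω, deletionEffect g (window (lowerCorner Q) N) Q ω ∂P ≤ ε

lemma antitone_integral_deletionEffect [IsFiniteMeasure P] (hg : IsRankFunction g)
    (Q : ElemCube d) :
    Antitone fun n : ℕ ↦ ∫ ω, deletionEffect g (window (lowerCorner Q) (n + 1)) Q ω ∂P :=
  fun n N hnN ↦ integral_mono ((boundedMeasurable_deletionEffect g _ Q).integrable P)
    ((boundedMeasurable_deletionEffect g _ Q).integrable P) <| deletionEffect_anti hg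
      (window_subset_window fun i ↦ by simpa using hnN)
      (faces_subset_window_lowerCorner Q (Nat.le_add_left 1 n))

lemma exists_stabilizesWithin [IsFiniteMeasure P] (hP : Stationary P)
    (hg : IsRankFunction g) (hg' : TranslationInvariant g) {ε : ℝ} (hε : 0 < ε) :
    ∃ ρ, 1 ≤ ρ ∧ StabilizesWithin P g ε ρ := by
  let originCube (b : Fin d → Bool) : ElemCube d := fun i ↦ (0, b i)
  let mean (b : Fin d → Bool) (n : ℕ) : ℝ :=
    ∫ ω, deletionEffect g (window 0 (n + 1)) (originCube b) ω ∂P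
  have hmean (Q : ElemCube d) (n : ℕ) :
      ∫ ω, deletionEffect g (window (lowerCorner Q) (n + 1)) Q ω ∂P = mean (fun i ↦ (Q i).2) n := by
    have hQ : translateCube (lowerCorner Q) (originCube fun i ↦ (Q i).2) = Q := by
      funext i
      simp [translateCube, lowerCorner, originCube]
    have hshift := integral_deletionEffect_window hP hg' (lowerCorner Q) (n + 1)
      (originCube fun i ↦ (Q i).2)
    rwa [hQ] at hshift
  have hanti (b : Fin d → Bool) : Antitone (mean b) :=
    antitone_integral_deletionEffect hg (originCube b)
  have hbdd (b : Fin d → Bool) : BddBelow (Set.range (mean b)) := by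
    refine ⟨0, ?_⟩
    rintro _ ⟨n, rfl⟩
    exact integral_nonneg fun ω ↦ deletionEffect_nonneg hg _ _ ω
  -- Up to translation there are only finitely many cubes, so the radius can be chosen uniformly.
  have hlarge : ∀ᶠ n in atTop, ∀ b, mean b n < (⨅ k, mean b k) + ε := eventually_all.2 fun b ↦
    (tendsto_atTop_ciInf (hanti b) (hbdd b)).eventually_lt_const (by linarith)
  obtain ⟨n, hn⟩ := hlarge.exists
  refine ⟨n + 1, Nat.le_add_left 1 n, fun Q N hN ↦ ?_⟩
  obtain ⟨N, rfl⟩ := Nat.exists_eq_add_of_le' (Nat.one_le_of_lt hN)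
  rw [hmean, hmean]
  linarith [hn fun i ↦ (Q i).2, ciInf_le (hbdd fun i ↦ (Q i).2) N]

end Stabilization

section Blocks

variable {d : ℕ}

/-- The centres of the blocks of radius `m`, spaced `2 * m + 2` apart so that distinct blocks share
no birth times. -/
def blockCenter (m : ℕ) (z : Fin d → ℤ) : Fin d → ℤ := fun i ↦ (2 * m + 2 : ℤ) * z i

/-- The largest `k` such that the blocks of radius `m` with indices in `[-k, k]^d` fit into
`[-n, n]^d`; meaningful only for `m ≤ n`. -/
def blockRange (n m : ℕ) : ℕ := (n - m) / (2 * m + 2)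

/-- The indices of the blocks of radius `m` used to fill `[-n, n]^d`. -/
def blockIndices (d n m : ℕ) : Finset (Fin d → ℤ) :=
  Fintype.piFinset fun _ ↦ Finset.Icc (-(blockRange n m : ℤ)) (blockRange n m)

lemma card_blockIndices (d n m : ℕ) : (blockIndices d n m).card = (2 * blockRange n m + 1) ^ d := by
  have hside : ((blockRange n m : ℤ) + 1 + blockRange n m).toNat = 2 * blockRange n m + 1 := by
    omega
  simp [blockIndices, hside]

lemma disjoint_cornerBox_blockCenter {m r : ℕ} (hr : r ≤ m + 1) {z z' : Fin d → ℤ} (hz : z ≠ z') :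
    Disjoint (cornerBox (blockCenter m z) r) (cornerBox (blockCenter m z') r) := by
  refine Finset.disjoint_left.2 fun Q hQ hQ' ↦ hz (funext fun i ↦ ?_)
  have hQi := mem_cornerBox.1 hQ i
  have hQi' := mem_cornerBox.1 hQ' i
  zify at hr
  simp only [blockCenter] at hQi hQi'
  refine le_antisymm ?_ ?_ <;> by_contra! hlt <;> nlinarith

lemma abs_blockCenter_add_le {n m : ℕ} (hmn : m ≤ n) {z : Fin d → ℤ} (hz : z ∈ blockIndices d n m)
    (i : Fin d) : |blockCenter m z i| + m ≤ n := by
  have hzi : |z i| ≤ blockRange n m :=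
    abs_le.2 (by simpa [blockIndices] using Fintype.mem_piFinset.1 hz i)
  have hfit : (blockRange n m : ℤ) * (2 * m + 2) ≤ n - m := by
    have := Nat.div_mul_le_self (n - m) (2 * m + 2)
    rw [blockRange]
    zify [hmn] at this
    exact_mod_cast this
  have hm : (0 : ℤ) ≤ 2 * m + 2 := by positivity
  rw [blockCenter, abs_mul, abs_of_nonneg hm]
  nlinarith

lemma window_blockCenter_subset {n m : ℕ} (hmn : m ≤ n) {z : Fin d → ℤ}
    (hz : z ∈ blockIndices d n m) : window (blockCenter m z) m ⊆ window 0 n :=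
  window_subset_window fun i ↦ by simpa using abs_blockCenter_add_le hmn hz i

lemma cornerBox_blockCenter_subset {n m r s : ℕ} (hmn : m ≤ n) (hrs : r + n ≤ s + m)
    {z : Fin d → ℤ} (hz : z ∈ blockIndices d n m) :
    cornerBox (blockCenter m z) r ⊆ cornerBox 0 s :=
  cornerBox_subset_cornerBox fun i ↦ by
    have := abs_blockCenter_add_le hmn hz i
    rw [Pi.zero_apply, sub_zero]
    omega

/-- The cubes whose lower corner lies within distance `r` of the centre of their block. -/
def interiorCubes (d n m r : ℕ) : Finset (ElemCube d) :=
  (blockIndices d n m).biUnion fun z ↦ cornerBox (blockCenter m z) r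

lemma card_interiorCubes (d n : ℕ) {m r : ℕ} (hr : r ≤ m + 1) :
    (interiorCubes d n m r).card = ((2 * blockRange n m + 1) * (4 * r)) ^ d := by
  rw [interiorCubes, Finset.card_biUnion fun z _ z' _ ↦ disjoint_cornerBox_blockCenter hr]
  simp [card_cornerBox, card_blockIndices, mul_pow]

lemma interiorCubes_subset {n m r : ℕ} (hr : r ≤ m) (hmn : m ≤ n) :
    interiorCubes d n m r ⊆ cornerBox 0 (n + 1) :=
  Finset.biUnion_subset.2 fun _ ↦ cornerBox_blockCenter_subset hmn (by omega)

lemma window_lowerCorner_subset {x : Fin d → ℤ} {r ρ m : ℕ} {Q : ElemCube d}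
    (hQ : Q ∈ cornerBox x r) (h : r + ρ ≤ m) : window (lowerCorner Q) ρ ⊆ window x m :=
  window_subset_window fun i ↦ by
    have := mem_cornerBox.1 hQ i
    have : |(Q i).1 - x i| ≤ r := abs_le.2 ⟨by linarith, by linarith⟩
    simp only [lowerCorner]
    omega

lemma window_subset_window_lowerCorner {x : Fin d → ℤ} {r n N : ℕ} {Q : ElemCube d}
    (hQ : Q ∈ cornerBox x r) (h : r + n ≤ N) : window x n ⊆ window (lowerCorner Q) N :=
  window_subset_window fun i ↦ by
    have := mem_cornerBox.1 hQ i
    have : |x i - (Q i).1| ≤ r := abs_le.2 ⟨by linarith, by linarith⟩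
    simp only [lowerCorner]
    omega

end Blocks

section BlockError

open ProbabilityTheory Function

variable {d : ℕ} {P : Measure (Config d)} {g : Finset (ElemCube d) → ℝ} {n m : ℕ}

/-- The lifetime integral in `[-n, n]^d` minus the sum of the lifetime integrals in the blocks of
radius `m`. -/
def blockError (g : Finset (ElemCube d) → ℝ) (n m : ℕ) (ω : Config d) : ℝ :=
  lifetimeIntegral g (window 0 n) ω -
    ∑ z ∈ blockIndices d n m, lifetimeIntegral g (window (blockCenter m z) m) ω

lemma boundedMeasurable_blockError (g : Finset (ElemCube d) → ℝ) (n m : ℕ) :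
    BoundedMeasurable (blockError g n m) :=
  (boundedMeasurable_lifetimeIntegral g _).sub
    (.sum _ fun _ _ ↦ boundedMeasurable_lifetimeIntegral g _)

lemma dependsOn_blockError (g : Finset (ElemCube d) → ℝ) (hmn : m ≤ n) :
    DependsOn (blockError g n m) (cornerBox (0 : Fin d → ℤ) (n + 1)) := by
  intro ω ω' h
  rw [blockError, blockError, dependsOn_lifetimeIntegral g 0 n h,
    Finset.sum_congr rfl fun z hz ↦ ?_]
  exact dependsOn_lifetimeIntegral g _ m fun Q hQ ↦
    h Q (cornerBox_blockCenter_subset hmn (by omega) hz hQ)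

lemma blockError_sub_update (g : Finset (ElemCube d) → ℝ) (n m : ℕ) (Q : ElemCube d)
    (ω : Config d) :
    blockError g n m ω - blockError g n m (update ω Q 1) = deletionEffect g (window 0 n) Q ω -
      ∑ z ∈ blockIndices d n m, deletionEffect g (window (blockCenter m z) m) Q ω := by
  simp only [blockError, deletionEffect, Finset.sum_sub_distrib]
  ring

lemma sum_deletionEffect_eq {Q : ElemCube d} {z : Fin d → ℤ} (hz : z ∈ blockIndices d n m)
    (hQ : Q ∈ cornerBox (blockCenter m z) (m + 1)) (ω : Config d) :
    ∑ z ∈ blockIndices d n m, deletionEffect g (window (blockCenter m z) m) Q ω =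
      deletionEffect g (window (blockCenter m z) m) Q ω :=
  Finset.sum_eq_single_of_mem z hz fun _ _ hne ↦ deletionEffect_window_eq_zero
    (Finset.disjoint_right.1 (disjoint_cornerBox_blockCenter le_rfl hne) hQ) ω

lemma sum_deletionEffect_le (hg : IsRankFunction g) (n m : ℕ) (Q : ElemCube d) (ω : Config d) :
    ∑ z ∈ blockIndices d n m, deletionEffect g (window (blockCenter m z) m) Q ω ≤ 4 ^ d := by
  by_cases h : ∃ z ∈ blockIndices d n m, Q ∈ cornerBox (blockCenter m z) (m + 1)
  · obtain ⟨z, hz, hQ⟩ := h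
    exact (sum_deletionEffect_eq hz hQ ω).trans_le (deletionEffect_le hg _ Q ω)
  · push Not at h
    rw [Finset.sum_eq_zero fun z hz ↦ deletionEffect_window_eq_zero (h z hz) ω]
    positivity

lemma sq_blockError_sub_update_le (hg : IsRankFunction g) (n m : ℕ) (Q : ElemCube d)
    (ω : Config d) : (blockError g n m ω - blockError g n m (update ω Q 1)) ^ 2 ≤ (4 ^ d) ^ 2 := by
  have hblocks_nonneg : 0 ≤ ∑ z ∈ blockIndices d n m,
      deletionEffect g (window (blockCenter m z) m) Q ω :=
    Finset.sum_nonneg fun _ _ ↦ deletionEffect_nonneg hg _ Q ω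
  have hblocks_le := sum_deletionEffect_le hg n m Q ω
  have hwindow_nonneg := deletionEffect_nonneg hg (window 0 n) Q ω
  have hwindow_le := deletionEffect_le hg (window 0 n) Q ω
  rw [blockError_sub_update]
  exact sq_le_sq' (by linarith) (by linarith)

lemma sq_blockError_sub_update_le_of_mem_interiorCubes (hg : IsRankFunction g) {r ρ : ℕ}
    (hρ : 1 ≤ ρ) (hr : r + ρ ≤ m) (hmn : m ≤ n) {Q : ElemCube d}
    (hQ : Q ∈ interiorCubes d n m r) (ω : Config d) :
    (blockError g n m ω - blockError g n m (update ω Q 1)) ^ 2 ≤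
      4 ^ d * (deletionEffect g (window (lowerCorner Q) ρ) Q ω -
        deletionEffect g (window (lowerCorner Q) (2 * n)) Q ω) := by
  obtain ⟨z, hz, hQz⟩ := Finset.mem_biUnion.1 hQ
  have hQblock : Q ∈ cornerBox (blockCenter m z) (m + 1) :=
    cornerBox_subset_cornerBox (fun i ↦ by rw [sub_self, abs_zero]; omega) hQz
  have hQn : Q ∈ cornerBox 0 n := cornerBox_blockCenter_subset hmn (by omega) hz hQz
  have hfaces := faces_subset_window_lowerCorner Q hρ
  have hsmall := window_lowerCorner_subset hQz hr
  have hblock := window_blockCenter_subset hmn hz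
  have hlarge := window_subset_window_lowerCorner hQn (two_mul n).ge
  have hsmall_anti := deletionEffect_anti hg hsmall hfaces ω
  have hblock_anti := deletionEffect_anti hg hblock (hfaces.trans hsmall) ω
  have hlarge_anti := deletionEffect_anti hg hlarge (hfaces.trans (hsmall.trans hblock)) ω
  have hnonneg := deletionEffect_nonneg hg (window 0 n) Q ω
  have hle := deletionEffect_le hg (window (blockCenter m z) m) Q ω
  rw [blockError_sub_update, sum_deletionEffect_eq hz hQblock, ← neg_sub, neg_sq, sq]
  exact mul_le_mul (by linarith) (by linarith) (by linarith) (by positivity)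

lemma integral_sq_blockError_sub_update_le [IsProbabilityMeasure P] (hg : IsRankFunction g)
    {r ρ : ℕ} {ε : ℝ} (hρ : 1 ≤ ρ) (hr : r + ρ ≤ m) (hmn : m ≤ n)
    (hstab : StabilizesWithin P g ε ρ) {Q : ElemCube d} (hQ : Q ∈ interiorCubes d n m r) :
    ∫ ω, (blockError g n m ω - blockError g n m (update ω Q 1)) ^ 2 ∂P ≤ 4 ^ d * ε := by
  have herror := boundedMeasurable_blockError g n m
  have hsmall := (boundedMeasurable_deletionEffect g (window (lowerCorner Q) ρ) Q).integrable P
  have hlarge :=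
    (boundedMeasurable_deletionEffect g (window (lowerCorner Q) (2 * n)) Q).integrable P
  have hle := integral_mono ((herror.sub (herror.comp measurable_update_left)).sq.integrable P)
    ((hsmall.sub hlarge).const_mul (4 ^ d))
    (sq_blockError_sub_update_le_of_mem_interiorCubes hg hρ hr hmn hQ)
  refine hle.trans ?_
  simp only [Pi.sub_apply]
  rw [integral_const_mul, integral_sub hsmall hlarge]
  gcongr
  exact hstab Q (2 * n) (by omega)

lemma variance_blockError_le [IsProbabilityMeasure P] (hg : IsRankFunction g)
    (hP : iIndepFun (fun (Q : ElemCube d) (ω : Config d) ↦ ω Q) P) {r ρ : ℕ} {ε : ℝ} (hε : 0 ≤ ε)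
    (hρ : 1 ≤ ρ) (hr : r + ρ ≤ m) (hmn : m ≤ n) (hstab : StabilizesWithin P g ε ρ) :
    Var[blockError g n m; P] ≤ (4 * (n + 1)) ^ d * (4 ^ d * ε) +
      ((4 * (n + 1)) ^ d - ((2 * blockRange n m + 1) * (4 * r)) ^ d) * (4 ^ d) ^ 2 := by
  have hsub : interiorCubes d n m r ⊆ cornerBox 0 (n + 1) := interiorCubes_subset (by omega) hmn
  have hcard : ((cornerBox (d := d) 0 (n + 1)).card : ℝ) = (4 * (n + 1)) ^ d := by
    exact_mod_cast card_cornerBox 0 (n + 1)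
  have hcard_interior : ((interiorCubes d n m r).card : ℝ) =
      ((2 * blockRange n m + 1) * (4 * r)) ^ d := by
    exact_mod_cast card_interiorCubes d n (r := r) (m := m) (by omega)
  have hinterior := Finset.sum_le_card_nsmul (interiorCubes d n m r) _ _ fun Q hQ ↦
    integral_sq_blockError_sub_update_le hg hρ hr hmn hstab hQ
  have hboundary := Finset.sum_le_card_nsmul (cornerBox 0 (n + 1) \ interiorCubes d n m r) _
    ((4 ^ d) ^ 2 : ℝ) fun Q _ ↦ (integral_mono_of_nonneg (μ := P) (.of_forall fun ω ↦ sq_nonneg _)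
      (integrable_const _) (.of_forall (sq_blockError_sub_update_le hg n m Q))).trans (by simp)
  rw [nsmul_eq_mul] at hinterior hboundary
  rw [Finset.card_sdiff_of_subset hsub, Nat.cast_sub (Finset.card_le_card hsub), hcard,
    hcard_interior] at hboundary
  calc Var[blockError g n m; P]
      ≤ ∑ Q ∈ cornerBox 0 (n + 1),
          ∫ ω, (blockError g n m ω - blockError g n m (update ω Q 1)) ^ 2 ∂P :=
        variance_le_sum_integral_sq_sub_update hP (fun _ ↦ 1) _
          (boundedMeasurable_blockError g n m) (dependsOn_blockError g hmn)
    _ ≤ (interiorCubes d n m r).card * (4 ^ d * ε) +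
          ((4 * (n + 1)) ^ d - ((2 * blockRange n m + 1) * (4 * r)) ^ d) * (4 ^ d) ^ 2 := by
        rw [← Finset.sum_sdiff hsub, add_comm]
        exact add_le_add hinterior hboundary
    _ ≤ _ := by
        gcongr
        rw [← hcard]
        exact_mod_cast Finset.card_le_card hsub

end BlockError

section Counting

lemma abs_blockRange_div_sub_le {n m : ℕ} (hn : 0 < n) (hmn : m ≤ n) :
    |(2 * blockRange n m + 1 : ℝ) / (2 * n) - (2 * m + 2 : ℝ)⁻¹| ≤ 1 / n := by
  have hle := Nat.div_mul_le_self (n - m) (2 * m + 2)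
  have hlt := Nat.lt_div_mul_add (a := n - m) (b := 2 * m + 2) (by omega)
  rw [← blockRange] at hle hlt
  have hle' : (blockRange n m * (2 * m + 2) + m : ℝ) ≤ n := by exact_mod_cast (by omega)
  have hlt' : (n : ℝ) < blockRange n m * (2 * m + 2) + (2 * m + 2) + m := by
    exact_mod_cast (by omega)
  have habs : |(2 * blockRange n m + 1 : ℝ) * (2 * m + 2) - 2 * n| ≤ 2 * (2 * m + 2) :=
    abs_le.2 ⟨by linarith, by linarith⟩
  have hn' : (0 : ℝ) < n := by exact_mod_cast hn
  have hdiff : (2 * blockRange n m + 1 : ℝ) / (2 * n) - (2 * m + 2 : ℝ)⁻¹ =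
      ((2 * blockRange n m + 1) * (2 * m + 2) - 2 * n) / (2 * n * (2 * m + 2)) := by
    field_simp
  rw [hdiff, abs_div, abs_of_pos (by positivity : (0 : ℝ) < 2 * n * (2 * m + 2)),
    div_le_div_iff₀ (by positivity) hn']
  nlinarith

lemma tendsto_blockRange_div (m : ℕ) :
    Tendsto (fun n : ℕ ↦ (2 * blockRange n m + 1 : ℝ) / (2 * n)) atTop (𝓝 (2 * m + 2 : ℝ)⁻¹) := by
  rw [tendsto_iff_norm_sub_tendsto_zero]
  refine squeeze_zero' (.of_forall fun n ↦ norm_nonneg _) ?_ tendsto_one_div_atTop_nhds_zero_nat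
  filter_upwards [eventually_gt_atTop 0, eventually_ge_atTop m] with n hn hmn
    using abs_blockRange_div_sub_le hn hmn

lemma tendsto_four_mul_sub_div (ρ : ℕ) :
    Tendsto (fun m : ℕ ↦ (2 * m + 2 : ℝ)⁻¹ * (4 * (m - ρ : ℕ))) atTop (𝓝 2) := by
  have hlim := (tendsto_one_div_add_atTop_nhds_zero_nat (𝕜 := ℝ)).const_mul (2 * (ρ + 1 : ℝ))
  rw [mul_zero] at hlim
  have hlim' := hlim.const_sub 2
  rw [sub_zero] at hlim'
  refine hlim'.congr' ?_
  filter_upwards [eventually_ge_atTop ρ] with m hρm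
  rw [Nat.cast_sub hρm]
  field_simp
  ring

lemma tendsto_four_mul_succ_div :
    Tendsto (fun n : ℕ ↦ (4 * (n + 1) : ℝ) / (2 * n)) atTop (𝓝 2) := by
  have hlim := (tendsto_const_div_atTop_nhds_zero_nat (2 : ℝ)).const_add 2
  rw [add_zero] at hlim
  refine hlim.congr' ?_
  filter_upwards [eventually_gt_atTop 0] with n hn
  have : (n : ℝ) ≠ 0 := by exact_mod_cast hn.ne'
  field_simp
  ring

lemma eventually_boundary_le (d ρ : ℕ) {δ : ℝ} (hδ : 0 < δ) :
    ∀ᶠ m : ℕ in atTop, ∀ᶠ n : ℕ in atTop,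
      (4 * (n + 1) : ℝ) ^ d - ((2 * blockRange n m + 1) * (4 * (m - ρ : ℕ))) ^ d ≤
        δ * (2 * n) ^ d := by
  have hlim_m := ((tendsto_four_mul_sub_div ρ).pow d).const_sub (2 ^ d)
  rw [sub_self] at hlim_m
  filter_upwards [hlim_m.eventually_lt_const hδ] with m hm
  have hlim_n := (tendsto_four_mul_succ_div.pow d).sub
    (((tendsto_blockRange_div m).mul_const (4 * ((m - ρ : ℕ) : ℝ))).pow d)
  filter_upwards [hlim_n.eventually_lt_const hm, eventually_gt_atTop 0] with n hn hn0
  have hvolume : (0 : ℝ) < (2 * n) ^ d := by positivity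
  rw [div_mul_eq_mul_div, div_pow, div_pow, ← sub_div, div_lt_iff₀ hvolume] at hn
  exact hn.le

end Counting

section BlockApproximation

open ProbabilityTheory

variable {d : ℕ} {P : Measure (Config d)} {g h : Finset (ElemCube d) → ℝ}

/-- The lifetime integral is approximated in variance by sums over blocks, up to an arbitrarily
small fraction of the volume, once the block size is large. -/
def BlockApproximable (P : Measure (Config d)) (g : Finset (ElemCube d) → ℝ) : Prop :=
  ∀ ε > 0, ∀ᶠ m in atTop, ∀ᶠ n : ℕ in atTop, Var[blockError g n m; P] ≤ ε * (2 * n) ^ d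

lemma variance_sub_le {Ω : Type*} [MeasurableSpace Ω] {P : Measure Ω} [IsFiniteMeasure P]
    {F G : Ω → ℝ} (hF : MemLp F 2 P) (hG : MemLp G 2 P) :
    Var[F - G; P] ≤ 2 * Var[F; P] + 2 * Var[G; P] := by
  have hadd := variance_add hF hG
  have hnonneg := variance_nonneg (F + G) P
  rw [variance_sub hF hG]
  linarith

lemma BlockApproximable.sub [IsFiniteMeasure P] (hg : BlockApproximable P g)
    (hh : BlockApproximable P h) : BlockApproximable P fun S ↦ g S - h S := by
  intro ε hε
  filter_upwards [hg (ε / 4) (by positivity), hh (ε / 4) (by positivity)] with m hgm hhm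
  filter_upwards [hgm, hhm] with n hgn hhn
  have hsub : blockError (fun S ↦ g S - h S) n m = blockError g n m - blockError h n m := by
    funext ω
    simp only [blockError, lifetimeIntegral_sub, Finset.sum_sub_distrib, Pi.sub_apply]
    ring
  rw [hsub]
  linarith [variance_sub_le ((boundedMeasurable_blockError g n m).memLp 2 P)
    ((boundedMeasurable_blockError h n m).memLp 2 P)]

theorem IsRankFunction.blockApproximable [IsProbabilityMeasure P] (hg : IsRankFunction g)
    (hg' : TranslationInvariant g) (hstat : Stationary P)
    (hP : iIndepFun (fun (Q : ElemCube d) (ω : Config d) ↦ ω Q) P) : BlockApproximable P g := by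
  intro ε hε
  set δ : ℝ := ε / (2 * 16 ^ d) with hδ_def
  have hδ : 0 < δ := by positivity
  obtain ⟨ρ, hρ, hstab⟩ := exists_stabilizesWithin hstat hg hg' hδ
  filter_upwards [eventually_boundary_le d ρ hδ, eventually_ge_atTop ρ] with m hboundary hρm
  filter_upwards [hboundary, eventually_ge_atTop m] with n hboundary hmn
  have hvolume : (4 * (n + 1) : ℝ) ^ d ≤ 4 ^ d * (2 * n) ^ d := by
    have hn : (1 : ℝ) ≤ n := by exact_mod_cast hρ.trans (hρm.trans hmn)
    rw [← mul_pow]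
    gcongr
    linarith
  have h16 : (4 ^ d : ℝ) * 4 ^ d = 16 ^ d := by rw [← mul_pow]; norm_num
  calc Var[blockError g n m; P]
      ≤ (4 * (n + 1)) ^ d * (4 ^ d * δ) + ((4 * (n + 1)) ^ d -
          ((2 * blockRange n m + 1) * (4 * (m - ρ : ℕ))) ^ d) * (4 ^ d) ^ 2 :=
        variance_blockError_le hg hP hδ.le hρ (by omega) hmn hstab
    _ ≤ 4 ^ d * (2 * n) ^ d * (4 ^ d * δ) + δ * (2 * n) ^ d * (4 ^ d) ^ 2 := by gcongr
    _ = 2 * 16 ^ d * δ * (2 * n) ^ d := by rw [← h16]; ring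
    _ = ε * (2 * n) ^ d := by rw [hδ_def]; field_simp

theorem blockApproximable_bettiRank [IsProbabilityMeasure P] (hstat : Stationary P)
    (hP : iIndepFun (fun (Q : ElemCube d) (ω : Config d) ↦ ω Q) P) (q : ℕ) :
    BlockApproximable P (bettiRank d q) := by
  have hid := (isRankFunction_gradedRank LinearMap.id q).blockApproximable
    (translationInvariant_gradedRank (fun _ ↦ rfl) q) hstat hP
  have hboundary (k : ℕ) := (isRankFunction_gradedRank (boundaryHom d) k).blockApproximable
    (translationInvariant_gradedRank boundaryHom_comp_translateChain k) hstat hP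
  exact (hid.sub (hboundary q)).sub (hboundary (q + 1))

lemma iIndepFun_lifetimeIntegral_block (g : Finset (ElemCube d) → ℝ)
    (hP : iIndepFun (fun (Q : ElemCube d) (ω : Config d) ↦ ω Q) P) (m : ℕ) :
    iIndepFun (fun z ↦ lifetimeIntegral g (window (blockCenter m z) m)) P :=
  iIndepFun_of_dependsOn_of_disjoint hP
    (fun _ _ hz ↦ Finset.disjoint_coe.2 (disjoint_cornerBox_blockCenter le_rfl hz))
    (fun _ ↦ (boundedMeasurable_lifetimeIntegral g _).measurable)
    (fun z ↦ dependsOn_lifetimeIntegral g (blockCenter m z) m)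

lemma hasLaw_lifetimeIntegral_window (hg : TranslationInvariant g) (hstat : Stationary P)
    (x : Fin d → ℤ) (n : ℕ) :
    HasLaw (lifetimeIntegral g (window x n)) (P.map (lifetimeIntegral g (window 0 n))) P where
  aemeasurable := (boundedMeasurable_lifetimeIntegral g _).measurable.aemeasurable
  map_eq := by
    have hpres := hstat.measurePreserving_configShift (-x)
    have hmeas := (boundedMeasurable_lifetimeIntegral g (window (0 : Fin d → ℤ) n)).measurable
    rw [funext (lifetimeIntegral_window hg x n)]
    conv_rhs => rw [← hpres.map_eq]
    exact (Measure.map_map hmeas hpres.measurable).symm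

lemma tendsto_card_blockIndices_div (d m : ℕ) :
    Tendsto (fun n : ℕ ↦ ((blockIndices d n m).card : ℝ) / (2 * n) ^ d) atTop
      (𝓝 ((2 * m + 2 : ℝ)⁻¹ ^ d)) := by
  simpa [card_blockIndices, div_pow] using (tendsto_blockRange_div m).pow d

end BlockApproximation

/-- **CLT for lifetime sums.** Fix `0 ≤ q < d` and let `P` be a stationary
product probability measure on `Ω = [0,1]^{K^d}` (the coordinates `(ω_Q)_{Q ∈ K^d}` are
independent under `P`). Then there is a constant `τ² ≥ 0` (depending on `d`, `q`) such that,
as `n → ∞`, (i) `|Λ_n|⁻¹ E[(L_q^n - E[L_q^n])²] → τ²`, and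
(ii) `|Λ_n|^{-1/2} (L_q^n - E[L_q^n])` converges in distribution to `N(0, τ²)`
(tested against bounded continuous functions). -/
theorem clt_lifetime_sum (d q : ℕ) (hq : q < d)
    (P : Measure (Config d)) [IsProbabilityMeasure P]
    (hstat : Stationary P)
    (hprod : ProbabilityTheory.iIndepFun (m := fun _ : ElemCube d => inferInstance)
      (fun (Q : ElemCube d) (ω : Config d) => ω Q) P) :
    ∃ τ2 : NNReal,
      Tendsto
          (fun n : ℕ => ((2 * (n : ℝ)) ^ d)⁻¹ *
            ∫ ω, (lifetimeSum d q n ω - ∫ ω', lifetimeSum d q n ω' ∂P) ^ 2 ∂P)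
          atTop (𝓝 (τ2 : ℝ))
        ∧ ∀ g : BoundedContinuousFunction ℝ ℝ,
            Tendsto
              (fun n : ℕ => ∫ ω, g ((Real.sqrt ((2 * (n : ℝ)) ^ d))⁻¹ *
                (lifetimeSum d q n ω - ∫ ω', lifetimeSum d q n ω' ∂P)) ∂P)
              atTop (𝓝 (∫ z, g z ∂(ProbabilityTheory.gaussianReal 0 τ2))) := by
  have hF (V : Finset (ElemCube d)) := boundedMeasurable_lifetimeIntegral (bettiRank d q) V
  have hlaw := hasLaw_lifetimeIntegral_window (translationInvariant_bettiRank d q) hstat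
  have hvolume : Tendsto (fun n : ℕ ↦ (2 * n : ℝ) ^ d) atTop atTop :=
    (tendsto_pow_atTop (Nat.ne_zero_of_lt hq)).comp
      (tendsto_natCast_atTop_atTop.const_mul_atTop zero_lt_two)
  have (m : ℕ) : IsProbabilityMeasure (P.map (lifetimeIntegral (bettiRank d q) (window 0 m))) :=
    Measure.isProbabilityMeasure_map (hF _).measurable.aemeasurable
  simp only [lifetimeSum_eq_lifetimeIntegral]
  exact clt_of_block_approximation
    (hZ := fun n ↦ (hF _).memLp 2 P)
    (hY := iIndepFun_lifetimeIntegral_block (bettiRank d q) hprod)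
    (hμ := fun m z ↦ hlaw (blockCenter m z) m)
    (hμ₂ := fun m ↦ (memLp_map_measure_iff aestronglyMeasurable_id
      (hF _).measurable.aemeasurable).2 ((hF _).memLp 2 P))
    (ha := hvolume)
    (hA := tendsto_card_blockIndices_div d)
    (hZY := blockApproximable_bettiRank hstat hprod q)

end
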